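/- For each k ∈ {2,3,4,5}, diam(k) = π − δ*_k, and this value is attained: the set S_k consisting of the k chords of length a*_k obtained from one fixed chord of length a*_k by rotating it about the center by the angles jπ/k for j = 0,1,…,k−1 satisfies diam(S_k) = π − δ*_k. -/

import Mathlib

open Real MeasureTheory

/-- Arc distance between points on the unit circle, given by their polar angles:
the length of the shorter arc between them. -/
noncomputable def arcDist (p q : ℝ) : ℝ := ⨅ n : ℤ, |p - q + 2 * π * n|

/-- Euclidean length of the chord between the circle points with angles `u` and `v`. -/
noncomputable def chordLen (u v : ℝ) : ℝ := 2 * Real.sin (arcDist u v / 2)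

/-- A pair of angles is a genuine shortcut (chord) if its endpoints are distinct points. -/
def IsShortcut (s : ℝ × ℝ) : Prop := arcDist s.1 s.2 ≠ 0

/-- δ(a) = arcsin(a/2) - a/2. -/
noncomputable def sdelta (a : ℝ) : ℝ := Real.arcsin (a / 2) - a / 2

/-- Cost of a path that starts at `p`, fully traverses the listed chords in order
(travelling along the circle in between), and ends at `q`. -/
noncomputable def walkCost (q : ℝ) : ℝ → List (ℝ × ℝ) → ℝ
  | p, [] => arcDist p q
  | p, e :: L => arcDist p e.1 + chordLen e.1 e.2 + walkCost q e.2 L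

/-- Shortest-path distance from `p` to `q` using the shortcuts of `S`
(each usable in either orientation, and always traversed completely). -/
noncomputable def dS (S : Finset (ℝ × ℝ)) (p q : ℝ) : ℝ :=
  sInf {c | ∃ L : List (ℝ × ℝ), (∀ e ∈ L, e ∈ S ∨ (e.2, e.1) ∈ S) ∧ c = walkCost q p L}

/-- Diameter of the circle augmented with the shortcuts of `S`. -/
noncomputable def diamS (S : Finset (ℝ × ℝ)) : ℝ :=
  sSup {d | ∃ p q : ℝ, d = dS S p q}

/-- diam(k): the optimal diameter achievable with `k` shortcuts. -/
noncomputable def diamK (k : ℕ) : ℝ :=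
  sInf {d | ∃ S : Finset (ℝ × ℝ), S.card = k ∧ (∀ s ∈ S, IsShortcut s) ∧ d = diamS S}

/-- Distance from `p` to `q` when a single shortcut with endpoints `u`, `v` is available. -/
noncomputable def dOne (u v p q : ℝ) : ℝ :=
  min (arcDist p q)
    (min (arcDist p u + chordLen u v + arcDist v q)
      (arcDist p v + chordLen u v + arcDist u q))

/-- Two angles represent the same point of the circle. -/
def SamePoint (p q : ℝ) : Prop := arcDist p q = 0

/-- Two pairs of angles represent the same chord of the circle. -/
def SameChord (s t : ℝ × ℝ) : Prop :=
  (SamePoint s.1 t.1 ∧ SamePoint s.2 t.2) ∨ (SamePoint s.1 t.2 ∧ SamePoint s.2 t.1)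

/-- `p` lies in the deep umbra of the shortcut from `u` to `u + β`
(where `0 < β ≤ π` is the counterclockwise arc spanned by the shortcut):
`p` lies in the inner umbra, and `|p u'| + |s| ≥ d(p, v')` where `u'` is the
endpoint closer to `p` and `v'` the other one. -/
def InDeepUmbra (u β p : ℝ) : Prop :=
  (∃ t : ℝ, sdelta (chordLen u (u + β)) ≤ t ∧ t ≤ β - sdelta (chordLen u (u + β)) ∧
    arcDist p (u + t) = 0) ∧
  (arcDist p u ≤ arcDist p (u + β) →
    arcDist p (u + β) ≤ chordLen p u + chordLen u (u + β)) ∧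
  (arcDist p (u + β) ≤ arcDist p u →
    arcDist p u ≤ chordLen p (u + β) + chordLen u (u + β))

/-- `d` equals δ*_k : for `k ∈ {3,4,5}` this is `δ(a*_k)` where `a*_k + δ(a*_k) = (k-1)π/k`,
and for `k = 6` it is `δ(2) = π/2 - 1`. -/
def dstarSpec (k : ℕ) (d : ℝ) : Prop :=
  (k = 6 ∧ d = sdelta 2) ∨
    (∃ a, a ∈ Set.Icc (0 : ℝ) 2 ∧ a + sdelta a = ((k : ℝ) - 1) * π / k ∧ d = sdelta a)

/-!
Write `θ = arcsin (a / 2)`, so that a chord of length `a` has half-arc `θ`, `δ(a) = θ - sin θ`, and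
the defining equation of `a*_k` reads `θ + sin θ = π - π / k`.

Upper bound: two points at arc distance more than `π - δ` have an arc centre within `π / (2k)` of
that of a short or long arc of one of the rotated chords, and the detour through this chord costs at
most `π / k + 2 sin θ = π - δ`.

Lower bound: fix `D < π - δ` and `x` with `0 ≤ x ≤ δ`. If the endpoints of every arc of length
`π - x` were joined by a path of length at most `D`, the centres of these arcs would fill the
circle. A path through a shortcut of half-arc `φ` has only `D - 2 sin φ` left for its legs, so the
centre of the bridged arc lies near the centre of one of the two arcs of that shortcut. For `φ ≥ θ`
this yields two balls of measure at most `D - 2 sin θ < π / k` each; for smaller `φ` only one ball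
remains, and for very small `φ` none. Altogether the centres have measure less than `2π`. For
`k = 2` and two long shortcuts a path may profit from both of them; there a Lipschitz potential
exhibits two antipodal points at distance at least `π - δ`.
-/

/-! ### Arcs and chords -/

instance instFactTwoPiPos : Fact (0 < 2 * π) := ⟨two_pi_pos⟩

theorem coe_add_two_pi_mul_int (p : ℝ) (n : ℤ) :
    ((p + 2 * π * n : ℝ) : AddCircle (2 * π)) = p :=
  Real.Angle.angle_eq_iff_two_pi_dvd_sub.2 ⟨n, add_sub_cancel_left p _⟩

theorem arcDist_le_abs_add (p q : ℝ) (n : ℤ) : arcDist p q ≤ |p - q + 2 * π * n| :=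
  ciInf_le ⟨0, by rintro _ ⟨n, rfl⟩; exact abs_nonneg _⟩ n

theorem arcDist_eq_norm (p q : ℝ) : arcDist p q = ‖((p - q : ℝ) : AddCircle (2 * π))‖ := by
  apply le_antisymm
  · rw [AddCircle.norm_eq]
    refine (arcDist_le_abs_add p q (-round ((2 * π)⁻¹ * (p - q)))).trans_eq ?_
    push_cast
    ring_nf
  · refine le_ciInf fun n => ?_
    rw [← coe_add_two_pi_mul_int (p - q) n]
    exact QuotientAddGroup.norm_mk_le_norm

theorem arcDist_eq_dist (p q : ℝ) :
    arcDist p q = dist (p : AddCircle (2 * π)) (q : AddCircle (2 * π)) := by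
  rw [arcDist_eq_norm, AddCircle.coe_sub, dist_eq_norm]

theorem exists_arcDist_eq_abs (p q : ℝ) : ∃ n : ℤ, arcDist p q = |p - q + 2 * π * n| := by
  refine ⟨-round ((2 * π)⁻¹ * (p - q)), ?_⟩
  rw [arcDist_eq_norm, AddCircle.norm_eq]
  push_cast
  ring_nf

theorem arcDist_le_abs (p q : ℝ) : arcDist p q ≤ |p - q| := by
  simpa using arcDist_le_abs_add p q 0

theorem arcDist_of_abs_le {p q : ℝ} (h : |p - q| ≤ π) : arcDist p q = |p - q| := by
  rw [arcDist_eq_norm, AddCircle.norm_coe_eq_abs_iff _ two_pi_pos.ne', abs_of_pos two_pi_pos]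
  linarith

theorem arcDist_congr {p p' q q' : ℝ} (hp : (p : AddCircle (2 * π)) = p')
    (hq : (q : AddCircle (2 * π)) = q') : arcDist p q = arcDist p' q' := by
  rw [arcDist_eq_dist, arcDist_eq_dist, hp, hq]

theorem arcDist_nonneg (p q : ℝ) : 0 ≤ arcDist p q := le_ciInf fun _ => abs_nonneg _

theorem arcDist_self (p : ℝ) : arcDist p p = 0 := by
  rw [arcDist_eq_dist, dist_self]

theorem arcDist_comm (p q : ℝ) : arcDist p q = arcDist q p := by
  rw [arcDist_eq_dist, arcDist_eq_dist, dist_comm]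

theorem arcDist_triangle (p q r : ℝ) : arcDist p r ≤ arcDist p q + arcDist q r := by
  simpa only [arcDist_eq_dist] using dist_triangle _ _ _

theorem arcDist_le_pi (p q : ℝ) : arcDist p q ≤ π := by
  have h := AddCircle.norm_le_half_period (2 * π) (x := ((p - q : ℝ) : AddCircle (2 * π)))
    two_pi_pos.ne'
  rwa [abs_of_pos two_pi_pos, mul_div_cancel_left₀ _ two_ne_zero, ← arcDist_eq_norm] at h

theorem arcDist_sub_add_self {z γ : ℝ} (h0 : 0 ≤ γ) (h1 : γ ≤ π / 2) :
    arcDist (z - γ) (z + γ) = 2 * γ := by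
  have habs : |z - γ - (z + γ)| = 2 * γ := by
    rw [show z - γ - (z + γ) = -(2 * γ) by ring, abs_neg, abs_of_nonneg (by linarith)]
  rw [arcDist_of_abs_le (by linarith), habs]

theorem chordLen_eq_two_mul_abs_sin (p q : ℝ) : chordLen p q = 2 * |sin ((p - q) / 2)| := by
  obtain ⟨n, hn⟩ := exists_arcDist_eq_abs p q
  have hnonneg : 0 ≤ sin (arcDist p q / 2) :=
    sin_nonneg_of_nonneg_of_le_pi (by linarith [arcDist_nonneg p q])
      (by linarith [arcDist_le_pi p q, pi_pos])
  rw [chordLen, ← abs_of_nonneg hnonneg, hn, ← abs_two, ← abs_div, abs_two]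
  have habs (y : ℝ) : |sin (|y|)| = |sin y| := by
    rcases abs_choice y with h | h <;> simp only [h, sin_neg, abs_neg]
  rw [habs, show (p - q + 2 * π * n) / 2 = (p - q) / 2 + n * π by ring, sin_add_int_mul_pi,
    abs_mul, abs_zpow, abs_neg, abs_one, one_zpow, one_mul]

theorem chordLen_nonneg (p q : ℝ) : 0 ≤ chordLen p q := by
  rw [chordLen_eq_two_mul_abs_sin]; positivity

theorem chordLen_comm (p q : ℝ) : chordLen p q = chordLen q p := by
  rw [chordLen, arcDist_comm, chordLen]

theorem abs_sin_add_le (a b : ℝ) : |sin (a + b)| ≤ |sin a| + |sin b| :=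
  calc |sin (a + b)| = |sin a * cos b + cos a * sin b| := by rw [sin_add]
    _ ≤ |sin a| * |cos b| + |cos a| * |sin b| := by
        simpa only [abs_mul] using abs_add_le (sin a * cos b) (cos a * sin b)
    _ ≤ |sin a| * 1 + 1 * |sin b| := by
        gcongr
        · exact abs_cos_le_one b
        · exact abs_cos_le_one a
    _ = |sin a| + |sin b| := by ring

theorem chordLen_triangle (p q r : ℝ) : chordLen p r ≤ chordLen p q + chordLen q r := by
  have h := abs_sin_add_le ((p - q) / 2) ((q - r) / 2)
  rw [← add_div, sub_add_sub_cancel] at h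
  simp only [chordLen_eq_two_mul_abs_sin]
  linarith

theorem chordLen_le_arcDist (p q : ℝ) : chordLen p q ≤ arcDist p q := by
  have h := sin_le (x := arcDist p q / 2) (by linarith [arcDist_nonneg p q])
  rw [chordLen]
  linarith

/-- Half of the arc length subtended by a chord. -/
noncomputable def halfArc (s : ℝ × ℝ) : ℝ := arcDist s.1 s.2 / 2

theorem halfArc_nonneg (s : ℝ × ℝ) : 0 ≤ halfArc s :=
  div_nonneg (arcDist_nonneg _ _) zero_le_two

theorem halfArc_le (s : ℝ × ℝ) : halfArc s ≤ π / 2 :=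
  div_le_div_of_nonneg_right (arcDist_le_pi _ _) zero_le_two

theorem arcDist_eq_two_mul_halfArc (s : ℝ × ℝ) : arcDist s.1 s.2 = 2 * halfArc s := by
  rw [halfArc]; ring

theorem chordLen_eq_two_mul_sin_halfArc (s : ℝ × ℝ) : chordLen s.1 s.2 = 2 * sin (halfArc s) := rfl

/-- The oriented chord from `u` to `v` spans the counterclockwise arc with centre `m` and
half-length `φ`. The centre may be any real representative of its point of the circle. -/
def Spans (u v m φ : ℝ) : Prop :=
  (u : AddCircle (2 * π)) = ↑(m - φ) ∧ (v : AddCircle (2 * π)) = ↑(m + φ)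

theorem Spans.reverse {u v m φ : ℝ} (h : Spans u v m φ) : Spans v u (m + π) (π - φ) := by
  refine ⟨h.2.trans ?_, h.1.trans ?_⟩
  · congr 1; ring
  · rw [show m + π + (π - φ) = m - φ + 2 * π by ring, AddCircle.coe_add_period]

theorem exists_spans_halfArc (s : ℝ × ℝ) :
    ∃ m, Spans s.1 s.2 m (halfArc s) ∨ Spans s.2 s.1 m (halfArc s) := by
  obtain ⟨n, hn⟩ := exists_arcDist_eq_abs s.1 s.2
  rw [arcDist_eq_two_mul_halfArc] at hn
  have hcoe (y : ℝ) (h : y = s.1 + 2 * π * n) : (s.1 : AddCircle (2 * π)) = y := by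
    rw [h, coe_add_two_pi_mul_int]
  rcases abs_choice (s.1 - s.2 + 2 * π * n) with h | h <;> rw [h] at hn
  · exact ⟨s.2 + halfArc s, Or.inr ⟨by rw [add_sub_cancel_right], hcoe _ (by linarith)⟩⟩
  · exact ⟨s.2 - halfArc s, Or.inl ⟨hcoe _ (by linarith), by rw [sub_add_cancel]⟩⟩

theorem Spans.arcDist_add_arcDist_le {u v m φ z γ r : ℝ} (h : Spans u v m φ)
    (hz : arcDist z m ≤ r) (hφ : |φ - γ| ≤ r) :
    arcDist (z - γ) u + arcDist v (z + γ) ≤ 2 * r := by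
  obtain ⟨n, hn⟩ := exists_arcDist_eq_abs z m
  have hu := arcDist_le_abs_add (z - γ) (m - φ) n
  have hv := arcDist_le_abs_add (z + γ) (m + φ) n
  rw [arcDist_congr rfl h.1, arcDist_comm v, arcDist_congr rfl h.2]
  rw [hn] at hz
  set Z := z - m + 2 * π * n
  rw [show z - γ - (m - φ) + 2 * π * n = Z + (φ - γ) by ring] at hu
  rw [show z + γ - (m + φ) + 2 * π * n = Z - (φ - γ) by ring] at hv
  obtain ⟨hZ, hZ'⟩ := abs_le.1 hz
  obtain ⟨hw, hw'⟩ := abs_le.1 hφ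
  rcases abs_cases (Z + (φ - γ)) with ⟨h₁, _⟩ | ⟨h₁, _⟩ <;>
    rcases abs_cases (Z - (φ - γ)) with ⟨h₂, _⟩ | ⟨h₂, _⟩ <;> linarith

theorem Spans.arcDist_le_of_add_le {u v m φ z γ ρ : ℝ} (h : Spans u v m φ)
    (hρ : arcDist (z - γ) u + arcDist v (z + γ) ≤ ρ) (hlt : ρ + 2 * |φ - γ| < 2 * π) :
    arcDist z m ≤ ρ / 2 ∧ 2 * |φ - γ| ≤ ρ := by
  rw [arcDist_congr rfl h.1, arcDist_congr h.2 rfl] at hρ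
  obtain ⟨i, hi⟩ := exists_arcDist_eq_abs (z - γ) (m - φ)
  obtain ⟨j, hj⟩ := exists_arcDist_eq_abs (m + φ) (z + γ)
  rw [hi, hj] at hρ
  have hij : i + j = 0 := by
    have hturn : |2 * π * ((i + j : ℤ) : ℝ)| < 2 * π :=
      calc |2 * π * ((i + j : ℤ) : ℝ)|
          = |(z - γ - (m - φ) + 2 * π * i) + (m + φ - (z + γ) + 2 * π * j) - 2 * (φ - γ)| := by
            push_cast; ring_nf
        _ ≤ |z - γ - (m - φ) + 2 * π * i| + |m + φ - (z + γ) + 2 * π * j| + |2 * (φ - γ)| :=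
            (abs_sub _ _).trans (by gcongr; exact abs_add_le _ _)
        _ < 2 * π := by rw [abs_mul 2, abs_two]; linarith
    rw [abs_mul, abs_of_pos two_pi_pos, mul_lt_iff_lt_one_right two_pi_pos, ← Int.cast_abs] at hturn
    exact Int.abs_lt_one_iff.1 (by exact_mod_cast hturn)
  obtain rfl : j = -i := by omega
  set Z := z - m + 2 * π * i
  rw [show z - γ - (m - φ) + 2 * π * i = Z + (φ - γ) by ring,
    show m + φ - (z + γ) + 2 * π * ((-i : ℤ) : ℝ) = (φ - γ) - Z by push_cast; ring] at hρ
  have hZ : 2 * |Z| ≤ ρ := by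
    have := abs_sub (Z + (φ - γ)) ((φ - γ) - Z)
    rw [show Z + (φ - γ) - ((φ - γ) - Z) = 2 * Z by ring, abs_mul, abs_two] at this
    exact this.trans hρ
  have hw : 2 * |φ - γ| ≤ ρ := by
    have := abs_add_le (Z + (φ - γ)) ((φ - γ) - Z)
    rw [show Z + (φ - γ) + ((φ - γ) - Z) = 2 * (φ - γ) by ring, abs_mul, abs_two] at this
    exact this.trans hρ
  exact ⟨(arcDist_le_abs_add z m i).trans (by linarith), hw⟩

/-! ### Distance in a network of shortcuts -/

/-- Distance along the circle and the shortcuts of a list, each shortcut being used at most once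
and only after all those behind it in the list have been taken into account. It bounds `dS` from
below, and the recursion allows shortcuts to be discarded one at a time. -/
noncomputable def netDist : List (ℝ × ℝ) → ℝ → ℝ → ℝ
  | [], p, q => arcDist p q
  | s :: S, p, q => min (netDist S p q)
      (min (netDist S p s.1 + chordLen s.1 s.2 + netDist S s.2 q)
        (netDist S p s.2 + chordLen s.1 s.2 + netDist S s.1 q))

theorem netDist_cons_le (s : ℝ × ℝ) (S : List (ℝ × ℝ)) (p q : ℝ) :
    netDist (s :: S) p q ≤ netDist S p q :=
  min_le_left _ _

theorem netDist_cons_le_fst_snd (s : ℝ × ℝ) (S : List (ℝ × ℝ)) (p q : ℝ) :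
    netDist (s :: S) p q ≤ netDist S p s.1 + chordLen s.1 s.2 + netDist S s.2 q :=
  (min_le_right _ _).trans (min_le_left _ _)

theorem netDist_cons_le_snd_fst (s : ℝ × ℝ) (S : List (ℝ × ℝ)) (p q : ℝ) :
    netDist (s :: S) p q ≤ netDist S p s.2 + chordLen s.1 s.2 + netDist S s.1 q :=
  (min_le_right _ _).trans (min_le_right _ _)

theorem netDist_cons_choice (s : ℝ × ℝ) (S : List (ℝ × ℝ)) (p q : ℝ) :
    netDist (s :: S) p q = netDist S p q ∨
    netDist (s :: S) p q = netDist S p s.1 + chordLen s.1 s.2 + netDist S s.2 q ∨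
    netDist (s :: S) p q = netDist S p s.2 + chordLen s.1 s.2 + netDist S s.1 q := by
  rw [netDist]
  rcases min_choice (netDist S p q) (min (netDist S p s.1 + chordLen s.1 s.2 + netDist S s.2 q)
    (netDist S p s.2 + chordLen s.1 s.2 + netDist S s.1 q)) with h | h
  · exact Or.inl h
  · rw [h]
    exact Or.inr (min_choice _ _)

theorem netDist_le_arcDist (S : List (ℝ × ℝ)) (p q : ℝ) : netDist S p q ≤ arcDist p q := by
  induction S with
  | nil => exact le_rfl
  | cons s S ih => exact (netDist_cons_le s S p q).trans ih

theorem netDist_self_le (S : List (ℝ × ℝ)) (p : ℝ) : netDist S p p ≤ 0 :=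
  (netDist_le_arcDist S p p).trans_eq (arcDist_self p)

-- `netDist S` is the largest function with these three properties.
theorem le_netDist {S : List (ℝ × ℝ)} {e : ℝ → ℝ → ℝ} (htri : ∀ p q r, e p r ≤ e p q + e q r)
    (harc : ∀ p q, e p q ≤ arcDist p q)
    (hS : ∀ s ∈ S, e s.1 s.2 ≤ chordLen s.1 s.2 ∧ e s.2 s.1 ≤ chordLen s.1 s.2) (p q : ℝ) :
    e p q ≤ netDist S p q := by
  induction S generalizing p q with
  | nil => exact harc p q
  | cons s S ih =>
    obtain ⟨⟨h₁, h₂⟩, hS⟩ := List.forall_mem_cons.1 hS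
    rcases netDist_cons_choice s S p q with h | h | h <;> rw [h]
    · exact ih hS p q
    · linarith [ih hS p s.1, ih hS s.2 q, htri p s.1 q, htri s.1 s.2 q]
    · linarith [ih hS p s.2, ih hS s.1 q, htri p s.2 q, htri s.2 s.1 q]

theorem chordLen_le_netDist (S : List (ℝ × ℝ)) (p q : ℝ) : chordLen p q ≤ netDist S p q :=
  le_netDist chordLen_triangle chordLen_le_arcDist
    (fun s _ => ⟨le_rfl, (chordLen_comm s.2 s.1).le⟩) p q

theorem netDist_nonneg (S : List (ℝ × ℝ)) (p q : ℝ) : 0 ≤ netDist S p q :=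
  (chordLen_nonneg p q).trans (chordLen_le_netDist S p q)

theorem arcDist_le_mul_netDist {S : List (ℝ × ℝ)} {ρ : ℝ} (hρ : 1 ≤ ρ)
    (hS : ∀ s ∈ S, arcDist s.1 s.2 ≤ ρ * chordLen s.1 s.2) (p q : ℝ) :
    arcDist p q ≤ ρ * netDist S p q := by
  have hρ0 : 0 < ρ := zero_lt_one.trans_le hρ
  have h : arcDist p q / ρ ≤ netDist S p q := by
    refine le_netDist (e := fun p q => arcDist p q / ρ) (fun p q r => ?_) (fun p q => ?_)
      (fun s hs => ?_) p q
    · rw [← add_div]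
      exact div_le_div_of_nonneg_right (arcDist_triangle p q r) hρ0.le
    · exact div_le_self (arcDist_nonneg p q) hρ
    · simp only [arcDist_comm s.2 s.1, and_self, div_le_iff₀' hρ0]
      exact hS s hs
  rwa [div_le_iff₀' hρ0] at h

theorem sub_le_netDist {S : List (ℝ × ℝ)} {f : ℝ → ℝ} (harc : ∀ p q, f q - f p ≤ arcDist p q)
    (hS : ∀ s ∈ S, |f s.1 - f s.2| ≤ chordLen s.1 s.2) (p q : ℝ) :
    f q - f p ≤ netDist S p q :=
  le_netDist (e := fun p q => f q - f p) (fun p q r => by linarith) harc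
    (fun s hs => ⟨by linarith [neg_abs_le (f s.1 - f s.2), hS s hs],
      (le_abs_self _).trans (hS s hs)⟩) p q

theorem netDist_triangle (S : List (ℝ × ℝ)) (p q r : ℝ) :
    netDist S p r ≤ netDist S p q + netDist S q r := by
  induction S generalizing p q r with
  | nil => exact arcDist_triangle p q r
  | cons s S ih =>
    have hc := chordLen_nonneg s.1 s.2
    have h₀ := netDist_cons_le s S p r
    have h₁ := netDist_cons_le_fst_snd s S p r
    have h₂ := netDist_cons_le_snd_fst s S p r
    have n₁ := netDist_nonneg S q s.1
    have n₂ := netDist_nonneg S q s.2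
    have n₃ := netDist_nonneg S s.1 q
    have n₄ := netDist_nonneg S s.2 q
    rcases netDist_cons_choice s S p q with h | h | h <;>
      rcases netDist_cons_choice s S q r with h' | h' | h' <;> rw [h, h'] <;>
      linarith [ih p q r, ih p q s.1, ih p q s.2, ih s.1 q r, ih s.2 q r, ih p s.1 r, ih p s.2 r]

theorem netDist_le_chordLen_of_mem {S : List (ℝ × ℝ)} {e : ℝ × ℝ} (he : e ∈ S) :
    netDist S e.1 e.2 ≤ chordLen e.1 e.2 ∧ netDist S e.2 e.1 ≤ chordLen e.1 e.2 := by
  induction S with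
  | nil => simp only [List.not_mem_nil] at he
  | cons s S ih =>
    rcases List.mem_cons.1 he with rfl | h
    · have h₁ := netDist_self_le S e.1
      have h₂ := netDist_self_le S e.2
      exact ⟨by linarith [netDist_cons_le_fst_snd e S e.1 e.2],
        by linarith [netDist_cons_le_snd_fst e S e.2 e.1]⟩
    · exact ⟨(netDist_cons_le s S _ _).trans (ih h).1, (netDist_cons_le s S _ _).trans (ih h).2⟩

theorem netDist_le_walkCost {S L : List (ℝ × ℝ)} (hL : ∀ e ∈ L, e ∈ S ∨ (e.2, e.1) ∈ S)
    (p q : ℝ) : netDist S p q ≤ walkCost q p L := by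
  induction L generalizing p with
  | nil => exact netDist_le_arcDist S p q
  | cons e L ih =>
    obtain ⟨he, hL⟩ := List.forall_mem_cons.1 hL
    have hchord : netDist S e.1 e.2 ≤ chordLen e.1 e.2 := by
      rcases he with h | h
      · exact (netDist_le_chordLen_of_mem h).1
      · exact (netDist_le_chordLen_of_mem h).2.trans_eq (chordLen_comm _ _)
    rw [walkCost]
    linarith [ih hL e.2, netDist_triangle S p e.1 q, netDist_triangle S e.1 e.2 q,
      netDist_le_arcDist S p e.1]

theorem netDist_eq_arcDist {S : List (ℝ × ℝ)} {R p q : ℝ} (hS : ∀ s ∈ S, R < chordLen s.1 s.2)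
    (h : netDist S p q ≤ R) : netDist S p q = arcDist p q := by
  induction S with
  | nil => rfl
  | cons s S ih =>
    obtain ⟨hs, hS⟩ := List.forall_mem_cons.1 hS
    rcases netDist_cons_choice s S p q with h' | h' | h' <;> rw [h'] at h ⊢
    · exact ih hS h
    · linarith [netDist_nonneg S p s.1, netDist_nonneg S s.2 q]
    · linarith [netDist_nonneg S p s.2, netDist_nonneg S s.1 q]

theorem arcDist_sub_le_netDist_singleton (s : ℝ × ℝ) (p q : ℝ) :
    arcDist p q - (arcDist s.1 s.2 - chordLen s.1 s.2) ≤ netDist [s] p q := by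
  have hs := chordLen_le_arcDist s.1 s.2
  rcases netDist_cons_choice s [] p q with h | h | h <;> rw [h] <;> simp only [netDist]
  · linarith
  · linarith [arcDist_triangle p s.1 q, arcDist_triangle s.1 s.2 q]
  · linarith [arcDist_triangle p s.2 q, arcDist_triangle s.2 s.1 q, arcDist_comm s.1 s.2]

theorem dS_le_walkCost {S : Finset (ℝ × ℝ)} {L : List (ℝ × ℝ)}
    (hL : ∀ e ∈ L, e ∈ S ∨ (e.2, e.1) ∈ S) (p q : ℝ) : dS S p q ≤ walkCost q p L := by
  refine csInf_le ⟨0, ?_⟩ ⟨L, hL, rfl⟩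
  rintro c ⟨L, hL, rfl⟩
  exact (netDist_nonneg S.toList p q).trans
    (netDist_le_walkCost (by simpa only [Finset.mem_toList] using hL) p q)

theorem dS_le_arcDist (S : Finset (ℝ × ℝ)) (p q : ℝ) : dS S p q ≤ arcDist p q :=
  dS_le_walkCost (L := []) (List.forall_mem_nil _) p q

theorem diamS_le {S : Finset (ℝ × ℝ)} {D : ℝ} (h : ∀ p q, dS S p q ≤ D) : diamS S ≤ D := by
  refine csSup_le ⟨_, 0, 0, rfl⟩ ?_
  rintro d ⟨p, q, rfl⟩
  exact h p q

theorem netDist_le_diamS {S : Finset (ℝ × ℝ)} {l : List (ℝ × ℝ)} (hl : ∀ s ∈ S, s ∈ l)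
    (p q : ℝ) : netDist l p q ≤ diamS S := by
  have hdS : netDist l p q ≤ dS S p q := by
    refine le_csInf ⟨_, [], List.forall_mem_nil _, rfl⟩ ?_
    rintro c ⟨L, hL, rfl⟩
    exact netDist_le_walkCost (fun e he => (hL e he).imp (hl e) (hl _)) p q
  refine hdS.trans (le_csSup ⟨π, ?_⟩ ⟨p, q, rfl⟩)
  rintro d ⟨p', q', rfl⟩
  exact (dS_le_arcDist S p' q').trans (arcDist_le_pi p' q')

/-- Two legs of total length at most `R` in the network `S` bridge arcs of total length at most
`ρ`. The legs are those of a path before and after it crosses one further shortcut. -/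
def TwoLegBound (S : List (ℝ × ℝ)) (R ρ : ℝ) : Prop :=
  ∀ a b c d, netDist S a b + netDist S c d ≤ R → arcDist a b + arcDist c d ≤ ρ

theorem TwoLegBound.of_lt_chordLen {S : List (ℝ × ℝ)} {R : ℝ}
    (hS : ∀ s ∈ S, R < chordLen s.1 s.2) : TwoLegBound S R R := by
  intro a b c d h
  rwa [← netDist_eq_arcDist hS (by linarith [netDist_nonneg S c d]),
    ← netDist_eq_arcDist hS (by linarith [netDist_nonneg S a b])]

theorem TwoLegBound.singleton (s : ℝ × ℝ) (R : ℝ) :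
    TwoLegBound [s] R (R + 4 * (halfArc s - sin (halfArc s))) := by
  intro a b c d h
  linarith [arcDist_sub_le_netDist_singleton s a b, arcDist_sub_le_netDist_singleton s c d,
    arcDist_eq_two_mul_halfArc s, chordLen_eq_two_mul_sin_halfArc s]

theorem add_le_arcsin {A B y : ℝ} (hA : A ∈ Set.Icc 0 (π / 2)) (hB : B ∈ Set.Icc 0 (π / 2))
    (h : sin A + sin B ≤ y) (hy : y ≤ 1) : A + B ≤ arcsin y := by
  obtain ⟨hA0, hA1⟩ := hA
  obtain ⟨hB0, hB1⟩ := hB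
  have hsA := sin_nonneg_of_nonneg_of_le_pi hA0 (by linarith [pi_pos])
  have hsB := sin_nonneg_of_nonneg_of_le_pi hB0 (by linarith [pi_pos])
  have hcA := cos_nonneg_of_neg_pi_div_two_le_of_le (by linarith [pi_pos]) hA1
  rcases le_or_gt (A + B) (π / 2) with hAB | hAB
  · rw [le_arcsin_iff_sin_le' ⟨by linarith [pi_pos], hAB⟩, sin_add]
    nlinarith [cos_le_one A, cos_le_one B]
  · have hcos : cos A < sin B := by
      rw [← sin_pi_div_two_sub]
      exact sin_lt_sin_of_lt_of_le_pi_div_two (by linarith [pi_pos]) hB1 (by linarith)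
    nlinarith [sin_sq_add_cos_sq A, sin_le_one A, cos_le_one A]

theorem TwoLegBound.two_mul_arcsin (S : List (ℝ × ℝ)) {R : ℝ} (hR : R ≤ 2) :
    TwoLegBound S R (2 * arcsin (R / 2)) := by
  intro a b c d h
  have hmem (p q : ℝ) : arcDist p q / 2 ∈ Set.Icc 0 (π / 2) :=
    ⟨by linarith [arcDist_nonneg p q], by linarith [arcDist_le_pi p q]⟩
  have hab := chordLen_le_netDist S a b
  have hcd := chordLen_le_netDist S c d
  rw [chordLen] at hab hcd
  linarith [add_le_arcsin (hmem a b) (hmem c d) (y := R / 2) (by linarith) (by linarith)]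

/-! ### Arcs bridged by a network -/

/-- Centres of the arcs of length `π - x` whose endpoints are joined within `D` by the network `S`.
The diameter exceeds `D` as soon as these centres do not fill the circle. -/
def bridgedCenters (S : List (ℝ × ℝ)) (x D : ℝ) : Set (AddCircle (2 * π)) :=
  (fun z : ℝ => (z : AddCircle (2 * π))) '' {z | netDist S (z - (π - x) / 2) (z + (π - x) / 2) ≤ D}

theorem exists_lt_netDist {S : List (ℝ × ℝ)} {x D : ℝ}
    (h : volume.real (bridgedCenters S x D) < 2 * π) : ∃ p q, D < netDist S p q := by
  by_contra! hall
  have huniv : bridgedCenters S x D = Set.univ :=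
    Set.eq_univ_of_forall fun y =>
      QuotientAddGroup.induction_on y fun z => Set.mem_image_of_mem _ (hall _ _)
  rw [huniv, Measure.real, AddCircle.measure_univ, ENNReal.toReal_ofReal two_pi_pos.le] at h
  exact h.false

theorem volume_real_closedBall_le (y : AddCircle (2 * π)) {r : ℝ} (hr : 0 ≤ r) :
    volume.real (Metric.closedBall y r) ≤ 2 * r := by
  rw [Measure.real, AddCircle.volume_closedBall]
  exact ENNReal.toReal_le_of_le_ofReal (by positivity)
    (ENNReal.ofReal_le_ofReal (min_le_right _ _))

section BridgedCenters

variable {s : ℝ × ℝ} {S : List (ℝ × ℝ)} {x D ρ c : ℝ}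

theorem bridgedCenters_eq_empty (hx : x ∈ Set.Icc 0 π) (hρ : 1 ≤ ρ)
    (hS : ∀ s ∈ S, arcDist s.1 s.2 ≤ ρ * chordLen s.1 s.2) (hD : ρ * D < π - x) :
    bridgedCenters S x D = ∅ := by
  refine (Set.image_eq_empty).2 (Set.eq_empty_of_forall_notMem fun z hz => ?_)
  have harc := arcDist_le_mul_netDist hρ hS (z - (π - x) / 2) (z + (π - x) / 2)
  rw [arcDist_sub_add_self (by linarith [hx.2]) (by linarith [hx.1])] at harc
  linarith [mul_le_mul_of_nonneg_left (Set.mem_ofPred_eq ▸ hz) (zero_le_one.trans hρ)]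

theorem bridgedCenters_nil (hx : x ∈ Set.Icc 0 π) (hD : D < π - x) :
    bridgedCenters [] x D = ∅ :=
  bridgedCenters_eq_empty hx le_rfl (List.forall_mem_nil _) (by rwa [one_mul])

-- The shortcut is crossed either the short way round, with the centre of its minor arc near the
-- centre in question, or the long way round, with the centre of its major arc near it.
theorem exists_bridgedCenters_cons_subset (hx : 0 ≤ x)
    (hρx : ρ < π - x + 2 * halfArc s) (H : TwoLegBound S (D - 2 * sin (halfArc s)) ρ) :
    ∃ m : ℝ, ∀ y ∈ bridgedCenters (s :: S) x D, y ∈ bridgedCenters S x D ∨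
      y ∈ Metric.closedBall (m : AddCircle (2 * π)) (ρ / 2) ∧ π - x - 2 * halfArc s ≤ ρ ∨
      y ∈ Metric.closedBall ((m + π : ℝ) : AddCircle (2 * π)) (ρ / 2) ∧
        π + x - 2 * halfArc s ≤ ρ := by
  have hθ1 := halfArc_le s
  obtain ⟨m, hm⟩ := exists_spans_halfArc s
  refine ⟨m, ?_⟩
  rintro _ ⟨z, hz, rfl⟩
  simp only [Metric.mem_closedBall, ← arcDist_eq_dist]
  have hshort : |halfArc s - (π - x) / 2| < π / 2 + (π - ρ) / 2 :=
    abs_lt.2 ⟨by linarith, by linarith⟩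
  have hlong : |π - halfArc s - (π - x) / 2| = (π + x - 2 * halfArc s) / 2 := by
    rw [abs_of_nonneg] <;> linarith
  have hcross {u v : ℝ} (hs : Spans u v m (halfArc s) ∨ Spans v u m (halfArc s))
      (hle : netDist S (z - (π - x) / 2) u + chordLen s.1 s.2 + netDist S v (z + (π - x) / 2) ≤ D) :
      arcDist z m ≤ ρ / 2 ∧ π - x - 2 * halfArc s ≤ ρ ∨
        arcDist z (m + π) ≤ ρ / 2 ∧ π + x - 2 * halfArc s ≤ ρ := by
    have harc := H (z - (π - x) / 2) u v (z + (π - x) / 2)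
        (by linarith [chordLen_eq_two_mul_sin_halfArc s])
    rcases hs with hs | hs
    · have h := hs.arcDist_le_of_add_le harc (by linarith)
      exact Or.inl ⟨h.1, by linarith [neg_abs_le (halfArc s - (π - x) / 2)]⟩
    · have h := hs.reverse.arcDist_le_of_add_le harc (by linarith)
      exact Or.inr ⟨h.1, by linarith⟩
  rw [Set.mem_ofPred_eq] at hz
  rcases netDist_cons_choice s S (z - (π - x) / 2) (z + (π - x) / 2) with h | h | h <;> rw [h] at hz
  · exact Or.inl ⟨z, hz, rfl⟩
  · exact Or.inr (hcross hm hz)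
  · exact Or.inr (hcross hm.symm hz)

theorem volume_bridgedCenters_cons_le_add_two_mul (hx : 0 ≤ x)
    (hρx : ρ < π - x + 2 * halfArc s) (H : TwoLegBound S (D - 2 * sin (halfArc s)) ρ)
    (hρc : ρ ≤ c) (hc : 0 ≤ c) :
    volume.real (bridgedCenters (s :: S) x D) ≤ volume.real (bridgedCenters S x D) + 2 * c := by
  obtain ⟨m, hm⟩ := exists_bridgedCenters_cons_subset hx hρx H
  have hsub : bridgedCenters (s :: S) x D ⊆ bridgedCenters S x D ∪
      (Metric.closedBall (m : AddCircle (2 * π)) (c / 2) ∪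
        Metric.closedBall ((m + π : ℝ) : AddCircle (2 * π)) (c / 2)) := fun y hy =>
    (hm y hy).imp id (Or.imp (fun h => Metric.closedBall_subset_closedBall (by linarith) h.1)
      fun h => Metric.closedBall_subset_closedBall (by linarith) h.1)
  have hball (y : AddCircle (2 * π)) := volume_real_closedBall_le y (div_nonneg hc zero_le_two)
  linarith [(measureReal_mono (μ := volume) hsub).trans (measureReal_union_le _ _),
    measureReal_union_le (μ := volume) (Metric.closedBall (m : AddCircle (2 * π)) (c / 2))
      (Metric.closedBall ((m + π : ℝ) : AddCircle (2 * π)) (c / 2)), hball m, hball (m + π : ℝ)]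

theorem volume_bridgedCenters_cons_le_add (hx : 0 ≤ x)
    (hρx : ρ < π - x + 2 * halfArc s) (H : TwoLegBound S (D - 2 * sin (halfArc s)) ρ)
    (hρ₁ : ρ < π + x - 2 * halfArc s) (hρc : ρ ≤ c) (hc : 0 ≤ c) :
    volume.real (bridgedCenters (s :: S) x D) ≤ volume.real (bridgedCenters S x D) + c := by
  obtain ⟨m, hm⟩ := exists_bridgedCenters_cons_subset hx hρx H
  have hsub : bridgedCenters (s :: S) x D ⊆ bridgedCenters S x D ∪
      Metric.closedBall (m : AddCircle (2 * π)) (c / 2) := by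
    intro y hy
    rcases hm y hy with h | ⟨h, -⟩ | ⟨-, h⟩
    · exact Or.inl h
    · exact Or.inr (Metric.closedBall_subset_closedBall (by linarith) h)
    · exact absurd h hρ₁.not_ge
  linarith [(measureReal_mono (μ := volume) hsub).trans (measureReal_union_le _ _),
    volume_real_closedBall_le (m : AddCircle (2 * π)) (div_nonneg hc zero_le_two)]

theorem bridgedCenters_cons_subset (hx : 0 ≤ x)
    (hρx : ρ < π - x + 2 * halfArc s) (H : TwoLegBound S (D - 2 * sin (halfArc s)) ρ)
    (hρ₀ : ρ < π - x - 2 * halfArc s) :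
    bridgedCenters (s :: S) x D ⊆ bridgedCenters S x D := by
  obtain ⟨m, hm⟩ := exists_bridgedCenters_cons_subset hx hρx H
  intro y hy
  rcases hm y hy with h | ⟨-, h⟩ | ⟨-, h⟩
  · exact h
  · exact absurd h hρ₀.not_ge
  · linarith [hx]

end BridgedCenters

theorem mul_sin_le_mul_sin {θ t : ℝ} (h0 : 0 ≤ θ) (h : θ ≤ t) (ht0 : 0 < t) (ht : t ≤ π) :
    θ * sin t ≤ t * sin θ := by
  have hchord := strictConcaveOn_sin_Icc.concaveOn.2 (Set.left_mem_Icc.2 pi_pos.le)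
    (Set.mem_Icc.2 ⟨ht0.le, ht⟩) (sub_nonneg.2 ((div_le_one ht0).2 h)) (div_nonneg h0 ht0.le)
    (sub_add_cancel 1 (θ / t))
  simp only [smul_eq_mul, sin_zero, mul_zero, zero_add] at hchord
  rw [div_mul_cancel₀ _ ht0.ne', div_mul_eq_mul_div, div_le_iff₀ ht0] at hchord
  linarith

theorem lt_sin_add_cos_of_mem_Icc {a t T θ v : ℝ} (ha : 0 ≤ a) (ht : a ≤ t) (hT : T ≤ π / 2)
    (hθ : θ ∈ Set.Icc t T) (hvt : v < sin t + cos (t - a)) (hvT : v < sin T + cos (T - a)) :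
    v < sin θ + cos (θ - a) := by
  have hsin : ConcaveOn ℝ (Set.Icc t T) sin := strictConcaveOn_sin_Icc.concaveOn.subset
    (Set.Icc_subset_Icc (ha.trans ht) (by linarith [pi_pos])) (convex_Icc _ _)
  have hcos : ConcaveOn ℝ (Set.Icc t T) fun y => cos (y - a) := by
    refine ((strictConcaveOn_cos_Icc.concaveOn.translate_left (-a)).subset (fun y hy => ?_)
      (convex_Icc _ _)).congr fun y _ => by simp only [Function.comp_apply, sub_eq_add_neg]
    exact Set.mem_Icc.2 ⟨by linarith [hy.1, pi_pos], by linarith [hy.2]⟩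
  have hle := hθ.1.trans hθ.2
  exact (lt_min hvt hvT).trans_le ((hsin.add hcos).min_le_of_mem_Icc
    (Set.left_mem_Icc.2 hle) (Set.right_mem_Icc.2 hle) hθ)

section Euclidean

variable {s : ℝ × ℝ} {S : List (ℝ × ℝ)} {x D t T c : ℝ}

-- Shortcuts of half-arc at most `t` shorten no distance by more than the factor `t / sin t`.
theorem bridgedCenters_eq_empty_of_halfArc_le (hx : x ∈ Set.Icc 0 π) (ht : t ∈ Set.Ioo 0 π)
    (hS : ∀ s ∈ S, halfArc s ≤ t) (hD : t * D < (π - x) * sin t) :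
    bridgedCenters S x D = ∅ := by
  obtain ⟨ht0, htπ⟩ := ht
  have hsin : 0 < sin t := sin_pos_of_pos_of_lt_pi ht0 htπ
  refine bridgedCenters_eq_empty (ρ := t / sin t) hx ((one_le_div hsin).2 (sin_le ht0.le))
    (fun s hs => ?_) (by rwa [div_mul_eq_mul_div, div_lt_iff₀ hsin])
  rw [arcDist_eq_two_mul_halfArc, chordLen_eq_two_mul_sin_halfArc, div_mul_eq_mul_div,
    le_div_iff₀ hsin]
  linarith [mul_sin_le_mul_sin (halfArc_nonneg s) (hS s hs) ht0 htπ.le]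

theorem two_mul_arcsin_sub_sin_halfArc_le (ht : 0 ≤ t) (hts : t ≤ halfArc s)
    (hc : c ∈ Set.Icc 0 π) (hDc : D / 2 - sin t ≤ sin (c / 2)) :
    D - 2 * sin (halfArc s) ≤ 2 ∧ 2 * arcsin ((D - 2 * sin (halfArc s)) / 2) ≤ c := by
  have hsin : sin t ≤ sin (halfArc s) :=
    sin_le_sin_of_le_of_le_pi_div_two (by linarith [pi_pos]) (halfArc_le s) hts
  have harcsin : arcsin ((D - 2 * sin (halfArc s)) / 2) ≤ c / 2 :=
    (arcsin_le_arcsin (by linarith)).trans_eq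
      (arcsin_sin (by linarith [hc.1, pi_pos]) (by linarith [hc.2]))
  exact ⟨by linarith [sin_le_one (c / 2)], by linarith⟩

theorem volume_bridgedCenters_cons_le_add_of_halfArc_mem_Icc (hx : 0 ≤ x)
    (hxt : x / 2 ≤ t) (hT : T ≤ π / 2) (hs : halfArc s ∈ Set.Icc t T) (hc : c ∈ Set.Ico 0 π)
    (hDc : D / 2 - sin t ≤ sin (c / 2)) (hDt : D / 2 < sin t + cos (t - x / 2))
    (hDT : D / 2 < sin T + cos (T - x / 2)) :
    volume.real (bridgedCenters (s :: S) x D) ≤ volume.real (bridgedCenters S x D) + c := by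
  obtain ⟨hR, hρ⟩ := two_mul_arcsin_sub_sin_halfArc_le (by linarith [hx]) hs.1
    (Set.Ico_subset_Icc_self hc) hDc
  have hlt : arcsin ((D - 2 * sin (halfArc s)) / 2) < π / 2 - (halfArc s - x / 2) := by
    rw [arcsin_lt_iff_lt_sin' ⟨by linarith [hs.2, hx, pi_pos], by linarith [hs.1]⟩,
      sin_pi_div_two_sub]
    linarith [lt_sin_add_cos_of_mem_Icc (by linarith [hx]) hxt hT hs hDt hDT]
  exact volume_bridgedCenters_cons_le_add hx (by linarith [hs.1])
    (TwoLegBound.two_mul_arcsin S hR) (by linarith) hρ hc.1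

theorem volume_bridgedCenters_cons_le_add_of_le_halfArc (hx : 0 ≤ x) (hxT : x / 2 ≤ T)
    (hs : T ≤ halfArc s) (hc : c ∈ Set.Ico 0 (2 * π)) (hDc : D / 2 - sin T ≤ sin (c / 4)) :
    volume.real (bridgedCenters (s :: S) x D) ≤ volume.real (bridgedCenters S x D) + c := by
  obtain ⟨hR, hρ⟩ := two_mul_arcsin_sub_sin_halfArc_le (D := D) (c := c / 2) (by linarith [hx]) hs
    ⟨by linarith [hc.1], by linarith [hc.2]⟩ (by rwa [div_div, show (2 : ℝ) * 2 = 4 by norm_num])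
  refine (volume_bridgedCenters_cons_le_add_two_mul hx (by linarith [hc.2])
    (TwoLegBound.two_mul_arcsin S hR) hρ (by linarith [hc.1])).trans_eq ?_
  rw [mul_div_cancel₀ _ two_ne_zero]

theorem volume_bridgedCenters_cons_le_add_of_euclidean (hx : 0 ≤ x) (hxt : x / 2 ≤ t)
    (htT : t ≤ T) (hT : T ≤ π / 2) (hs : t ≤ halfArc s) (hc : c ∈ Set.Ico 0 π)
    (hDc : D / 2 - sin t ≤ sin (c / 2)) (hDt : D / 2 < sin t + cos (t - x / 2))
    (hDT : D / 2 < sin T + cos (T - x / 2)) (hDc' : D / 2 - sin T ≤ sin (c / 4)) :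
    volume.real (bridgedCenters (s :: S) x D) ≤ volume.real (bridgedCenters S x D) + c := by
  rcases le_total (halfArc s) T with h | h
  · exact volume_bridgedCenters_cons_le_add_of_halfArc_mem_Icc hx hxt hT ⟨hs, h⟩ hc hDc hDt hDT
  · exact volume_bridgedCenters_cons_le_add_of_le_halfArc hx (hxt.trans htT) h
      ⟨hc.1, by linarith [hc.2, pi_pos]⟩ hDc'

end Euclidean

theorem volume_bridgedCenters_append_le {x D c : ℝ} {l S : List (ℝ × ℝ)}
    (hl : ∀ s ∈ l, ∀ L ⊆ l ++ S, volume.real (bridgedCenters (s :: L) x D) ≤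
      volume.real (bridgedCenters L x D) + c) :
    volume.real (bridgedCenters (l ++ S) x D) ≤
      l.length * c + volume.real (bridgedCenters S x D) := by
  induction l with
  | nil => simp
  | cons s l ih =>
    obtain ⟨hs, hl⟩ := List.forall_mem_cons.1 hl
    have hsub : l ++ S ⊆ s :: l ++ S := List.subset_cons_self s (l ++ S)
    rw [List.cons_append, List.length_cons]
    push_cast
    linarith [hs (l ++ S) hsub, ih fun s hs L hL => hl s hs L (List.Subset.trans hL hsub)]

theorem lt_diamS_of_volume_lt {S : Finset (ℝ × ℝ)} {l : List (ℝ × ℝ)} {x D : ℝ}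
    (hl : ∀ s ∈ S, s ∈ l) (h : volume.real (bridgedCenters l x D) < 2 * π) : D < diamS S := by
  obtain ⟨p, q, hpq⟩ := exists_lt_netDist h
  exact hpq.trans_le (netDist_le_diamS hl p q)

theorem lt_diamS_of_card_filter_mul_lt {S : Finset (ℝ × ℝ)} {x D t c : ℝ} (hx : x ∈ Set.Icc 0 π)
    (ht : t ∈ Set.Ioo 0 π) (hD : t * D < (π - x) * sin t)
    (hstep : ∀ (s : ℝ × ℝ) (l : List (ℝ × ℝ)), t ≤ halfArc s →
      volume.real (bridgedCenters (s :: l) x D) ≤ volume.real (bridgedCenters l x D) + c)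
    (hcard : (S.filter (t < halfArc ·)).card * c < 2 * π) : D < diamS S := by
  classical
  set l := (S.filter (t < halfArc ·)).toList
  set l' := (S.filter (¬ t < halfArc ·)).toList
  have hl (s) (hs : s ∈ S) : s ∈ l ++ l' := by
    simpa only [l, l', List.mem_append, Finset.mem_toList, Finset.mem_filter, hs, true_and] using
      lt_or_ge t (halfArc s) |>.imp id not_lt.2
  have hempty : bridgedCenters l' x D = ∅ :=
    bridgedCenters_eq_empty_of_halfArc_le hx ht (fun s hs => by
      simpa using (Finset.mem_filter.1 (Finset.mem_toList.1 hs)).2) hD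
  refine lt_diamS_of_volume_lt hl ((volume_bridgedCenters_append_le fun s hs L _ =>
    hstep s L (Finset.mem_filter.1 (Finset.mem_toList.1 hs)).2.le).trans_lt ?_)
  rwa [hempty, measureReal_empty, add_zero, Finset.length_toList]

/-! ### Taylor bounds -/

theorem antitone_pow_div_factorial {x : ℝ} {m : ℕ} (h0 : 0 ≤ x) (h : x ^ 2 ≤ (m + 1) * (m + 2)) :
    Antitone fun n : ℕ => x ^ (2 * n + m) / (2 * n + m).factorial := by
  refine antitone_nat_of_succ_le fun n => ?_
  have hfac : ((2 * (n + 1) + m).factorial : ℝ) =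
      (2 * n + m + 2) * (2 * n + m + 1) * (2 * n + m).factorial := by
    rw [show 2 * (n + 1) + m = 2 * n + m + 1 + 1 by ring, Nat.factorial_succ, Nat.factorial_succ]
    push_cast
    ring
  have hsq : x ^ 2 ≤ (2 * n + m + 2) * (2 * n + m + 1) := by nlinarith
  rw [hfac, show 2 * (n + 1) + m = 2 * n + m + 2 by ring, pow_add, mul_comm (x ^ _),
    div_le_div_iff₀ (by positivity) (by positivity)]
  calc x ^ 2 * x ^ (2 * n + m) * ((2 * n + m).factorial : ℝ)
      ≤ (2 * n + m + 2) * (2 * n + m + 1) * x ^ (2 * n + m) * ((2 * n + m).factorial : ℝ) := by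
        gcongr
    _ = x ^ (2 * n + m) * ((2 * n + m + 2) * (2 * n + m + 1) * ((2 * n + m).factorial : ℝ)) := by
        ring

theorem antitone_sin_taylor_term {x : ℝ} (h0 : 0 ≤ x) (h : x ^ 2 ≤ 6) :
    Antitone fun n : ℕ => x ^ (2 * n + 1) / (2 * n + 1).factorial :=
  antitone_pow_div_factorial h0 (by norm_num; exact h)

theorem sum_le_sin {x : ℝ} (h0 : 0 ≤ x) (h : x ^ 2 ≤ 6) (k : ℕ) :
    ∑ n ∈ Finset.range (2 * k), (-1) ^ n * (x ^ (2 * n + 1) / (2 * n + 1).factorial) ≤ sin x := by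
  have htend := (hasSum_sin x).tendsto_sum_nat
  simp only [mul_div_assoc] at htend
  exact (antitone_sin_taylor_term h0 h).alternating_series_le_tendsto htend k

theorem sin_le_sum {x : ℝ} (h0 : 0 ≤ x) (h : x ^ 2 ≤ 6) (k : ℕ) :
    sin x ≤
      ∑ n ∈ Finset.range (2 * k + 1), (-1) ^ n * (x ^ (2 * n + 1) / (2 * n + 1).factorial) := by
  have htend := (hasSum_sin x).tendsto_sum_nat
  simp only [mul_div_assoc] at htend
  exact (antitone_sin_taylor_term h0 h).tendsto_le_alternating_series htend k

theorem sum_le_cos {x : ℝ} (h0 : 0 ≤ x) (h : x ^ 2 ≤ 2) (k : ℕ) :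
    ∑ n ∈ Finset.range (2 * k), (-1) ^ n * (x ^ (2 * n) / (2 * n).factorial) ≤ cos x := by
  have htend := (hasSum_cos x).tendsto_sum_nat
  simp only [mul_div_assoc] at htend
  exact (antitone_pow_div_factorial (m := 0) h0
    (by norm_num; exact h)).alternating_series_le_tendsto htend k

theorem le_sin_of_le_taylor {v x : ℝ} (h0 : 0 ≤ x) (h : x ^ 2 ≤ 6)
    (hv : v ≤ x - x ^ 3 / 6 + x ^ 5 / 120 - x ^ 7 / 5040) : v ≤ sin x := by
  refine hv.trans ((sum_le_sin h0 h 2).trans_eq' ?_)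
  norm_num [Finset.sum_range_succ, Nat.factorial]
  ring

theorem sin_le_of_taylor_le {v x : ℝ} (h0 : 0 ≤ x) (h : x ^ 2 ≤ 6)
    (hv : x - x ^ 3 / 6 + x ^ 5 / 120 - x ^ 7 / 5040 + x ^ 9 / 362880 ≤ v) : sin x ≤ v := by
  refine ((sin_le_sum h0 h 2).trans_eq ?_).trans hv
  norm_num [Finset.sum_range_succ, Nat.factorial]
  ring

theorem le_cos_of_le_taylor {v x : ℝ} (h0 : 0 ≤ x) (h : x ^ 2 ≤ 2)
    (hv : v ≤ 1 - x ^ 2 / 2 + x ^ 4 / 24 - x ^ 6 / 720) : v ≤ cos x := by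
  refine hv.trans ((sum_le_cos h0 h 2).trans_eq' ?_)
  norm_num [Finset.sum_range_succ, Nat.factorial]
  ring

/-! ### Lower bound for three, four and five shortcuts -/

section LongChords

variable {s : ℝ × ℝ} {l : List (ℝ × ℝ)} {θ₀ x ρ D t : ℝ}

theorem sub_sin_le_sub_sin {a b : ℝ} (h : a ≤ b) : a - sin a ≤ b - sin b := by
  have := (abs_le.1 (abs_sin_sub_sin_le b a)).2
  rw [abs_of_nonneg (sub_nonneg.2 h)] at this
  linarith

theorem volume_bridgedCenters_cons_le_of_forall_le_halfArc (hx : x = θ₀ - sin θ₀)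
    (hρ : ρ = D - 2 * sin θ₀) (hθ₀ : θ₀ ∈ Set.Icc 0 (π / 2)) (hD2 : 2 ≤ D)
    (hDx : D < π - x) (hρt : ρ < 2 * sin t) (hρπ : ρ < π / 2) (hsinρ : D / 2 - sin t ≤ sin ρ)
    (hxt : x / 2 ≤ t) (hDt : D / 2 < sin t + cos (t - x / 2))
    (hDρ : D / 2 < sin ρ + cos (ρ - x / 2)) (hs : t ≤ halfArc s)
    (hl : ∀ s ∈ l, t ≤ halfArc s) :
    volume.real (bridgedCenters (s :: l) x D) ≤ volume.real (bridgedCenters l x D) + 2 * ρ := by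
  have hx0 : 0 ≤ x := by linarith [sin_le hθ₀.1]
  have ht0 : 0 ≤ t := by linarith
  have hsin {a b : ℝ} (ha : 0 ≤ a) (hab : a ≤ b) (hb : b ≤ π / 2) : sin a ≤ sin b :=
    sin_le_sin_of_le_of_le_pi_div_two (by linarith [pi_pos]) hb hab
  have hlong {R : ℝ} (hR : R < 2 * sin t) : TwoLegBound l R R :=
    TwoLegBound.of_lt_chordLen fun s hs => by
      rw [chordLen_eq_two_mul_sin_halfArc]
      linarith [hsin ht0 (hl s hs) (halfArc_le s)]
  have hθπ := halfArc_le s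
  have hρ0 : 0 ≤ ρ := by linarith [sin_le_one θ₀]
  have hst := hsin ht0 hs hθπ
  rcases le_total θ₀ (halfArc s) with h | h
  · have := hsin hθ₀.1 h hθπ
    exact volume_bridgedCenters_cons_le_add_two_mul hx0 (by linarith)
      (hlong (by linarith)) (by linarith) hρ0
  rcases lt_or_ge (D - 2 * sin t) (2 * sin (halfArc s)) with h' | h'
  · exact volume_bridgedCenters_cons_le_add hx0 (by linarith)
      (hlong (by linarith)) (by linarith [sub_sin_le_sub_sin h]) (by linarith [sin_le hρ0])
      (by linarith)
  · have hle : halfArc s ≤ ρ := (strictMonoOn_sin.le_iff_le ⟨by linarith, hθπ⟩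
      ⟨by linarith, hρπ.le⟩).1 (by linarith)
    exact volume_bridgedCenters_cons_le_add_of_halfArc_mem_Icc hx0 hxt hρπ.le ⟨hs, hle⟩
      ⟨by linarith, by linarith⟩ (by rwa [mul_div_cancel_left₀ _ two_ne_zero]) hDt hDρ

-- `ρ` is what remains of `D` for the two legs beside a shortcut of half-arc `θ₀`. If
-- `θ₀ + sin θ₀ = π - π / k`, then `k * ρ < π` is equivalent to `D < π - (θ₀ - sin θ₀)`.
theorem lt_diamS_of_forall_le_halfArc {S : Finset (ℝ × ℝ)} (hx : x = θ₀ - sin θ₀)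
    (hρ : ρ = D - 2 * sin θ₀) (hθ₀ : θ₀ ∈ Set.Icc 0 (π / 2)) (hD2 : 2 ≤ D)
    (hDx : D < π - x) (hρt : ρ < 2 * sin t) (hρπ : ρ < π / 2) (hsinρ : D / 2 - sin t ≤ sin ρ)
    (hxt : x / 2 ≤ t) (hDt : D / 2 < sin t + cos (t - x / 2))
    (hDρ : D / 2 < sin ρ + cos (ρ - x / 2)) (hS : ∀ s ∈ S, t ≤ halfArc s)
    (hcard : S.card * ρ < π) : D < diamS S := by
  have hxmem : x ∈ Set.Icc 0 π := ⟨by linarith [sin_le hθ₀.1], by linarith⟩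
  have hvol := volume_bridgedCenters_append_le (l := S.toList) (S := []) (x := x) (D := D)
    (c := 2 * ρ) fun s hs L hL =>
      volume_bridgedCenters_cons_le_of_forall_le_halfArc hx hρ hθ₀ hD2 hDx hρt hρπ hsinρ hxt
        hDt hDρ (hS s (Finset.mem_toList.1 hs)) fun s hs => hS s (by simpa using hL hs)
  rw [List.append_nil, bridgedCenters_nil hxmem hDx, measureReal_empty, add_zero,
    Finset.length_toList] at hvol
  exact lt_diamS_of_volume_lt (fun s hs => Finset.mem_toList.2 hs) (by linarith)

end LongChords

section ThreeToFive

theorem le_of_add_sin_le_add_sin {a b : ℝ} (hb : 0 ≤ b) (ha : a ≤ π / 2)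
    (h : a + sin a ≤ b + sin b) : a ≤ b := by
  by_contra! hlt
  linarith [sin_lt_sin_of_lt_of_le_pi_div_two (by linarith [pi_pos]) ha hlt]

-- A shortcut of half-arc at most `t` is wasted, so only `S.card - 1` of them have to cover the
-- centres.
theorem lt_diamS_of_exists_halfArc_le {S : Finset (ℝ × ℝ)} {x D t T c : ℝ}
    (hx : x ∈ Set.Icc 0 π) (ht : 0 < t) (hxt : x / 2 ≤ t) (htT : t ≤ T) (hT : T ≤ π / 2)
    (hD : t * D < (π - x) * sin t) (hc : c ∈ Set.Ico 0 π) (hDc : D / 2 - sin t ≤ sin (c / 2))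
    (hDt : D / 2 < sin t + cos (t - x / 2)) (hDT : D / 2 < sin T + cos (T - x / 2))
    (hDc' : D / 2 - sin T ≤ sin (c / 4)) (hS : ∃ s ∈ S, halfArc s ≤ t)
    (hcard : (S.card - 1) * c < 2 * π) : D < diamS S := by
  obtain ⟨s, hs, hst⟩ := hS
  refine lt_diamS_of_card_filter_mul_lt hx ⟨ht, by linarith [pi_pos]⟩ hD
    (fun s l hs => volume_bridgedCenters_cons_le_add_of_euclidean hx.1 hxt htT hT hs hc hDc hDt hDT
      hDc') (hcard.trans_le' (mul_le_mul_of_nonneg_right ?_ hc.1))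
  have hlt : (S.filter (t < halfArc ·)).card < S.card :=
    Finset.card_lt_card (Finset.filter_ssubset.2 ⟨s, hs, not_lt.2 hst⟩)
  rw [le_sub_iff_add_le]
  exact_mod_cast hlt

variable {S : Finset (ℝ × ℝ)} {θ₀ D : ℝ}

theorem lt_diamS_of_card_eq_five_of_exists_halfArc_le (hS : S.card = 5) (hD : D ≤ 2.6269)
    (hshort : ∃ s ∈ S, halfArc s ≤ 0.82) : D < diamS S := by
  have hπ₁ := pi_gt_d6
  have hπ₂ := pi_lt_d6
  have ht : 0.7311 ≤ sin 0.82 := le_sin_of_le_taylor (by norm_num) (by norm_num) (by norm_num)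
  have hT : 0.932 ≤ sin 1.2 := le_sin_of_le_taylor (by norm_num) (by norm_num) (by norm_num)
  have hc : 0.706 ≤ sin (1.57 / 2) :=
    le_sin_of_le_taylor (by norm_num) (by norm_num) (by norm_num)
  have hc' : 0.382 ≤ sin (1.57 / 4) :=
    le_sin_of_le_taylor (by norm_num) (by norm_num) (by norm_num)
  have hcost : 0.717 ≤ cos (0.82 - 0.1 / 2) :=
    le_cos_of_le_taylor (by norm_num) (by norm_num) (by norm_num)
  have hcosT : 0.407 ≤ cos (1.2 - 0.1 / 2) :=
    le_cos_of_le_taylor (by norm_num) (by norm_num) (by norm_num)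
  exact lt_diamS_of_exists_halfArc_le (x := 0.1) (T := 1.2) (c := 1.57)
    ⟨by norm_num, by linarith⟩ (by norm_num) (by norm_num) (by norm_num) (by linarith)
    (by nlinarith) ⟨by norm_num, by linarith⟩ (by linarith) (by linarith) (by linarith)
    (by linarith) hshort (by rw [hS]; norm_num; linarith)

theorem lt_diamS_of_card_eq_five (hS : S.card = 5) (hθ₀ : θ₀ ∈ Set.Icc 0 (π / 2))
    (hsum : θ₀ + sin θ₀ = π - π / 5)
    (hD : D ∈ Set.Ioo (π - (θ₀ - sin θ₀) - 1 / 1000) (π - (θ₀ - sin θ₀))) : D < diamS S := by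
  obtain ⟨hD₁, hD₂⟩ := hD
  have hπ₁ := pi_gt_d6
  have hπ₂ := pi_lt_d6
  have hsinθ₁ : sin 1.514 ≤ 0.99842 := sin_le_of_taylor_le (by norm_num) (by norm_num) (by norm_num)
  have hθ₁ : 1.514 ≤ θ₀ := le_of_add_sin_le_add_sin hθ₀.1 (by linarith) (by linarith)
  have hx := sub_sin_le_sub_sin hθ₀.2
  rw [sin_pi_div_two] at hx
  by_cases hshort : ∃ s ∈ S, halfArc s ≤ 0.82
  · exact lt_diamS_of_card_eq_five_of_exists_halfArc_le hS (by linarith) hshort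
  push Not at hshort
  set ρ := D - 2 * sin θ₀ with hρ
  have ht : 0.7311 ≤ sin 0.82 := le_sin_of_le_taylor (by norm_num) (by norm_num) (by norm_num)
  have hsin : 0.586 ≤ sin 0.627 := le_sin_of_le_taylor (by norm_num) (by norm_num) (by norm_num)
  have hsinρ : sin 0.627 ≤ sin ρ :=
    sin_le_sin_of_le_of_le_pi_div_two (by linarith) (by linarith) (by linarith)
  have hcos : 0.84 ≤ cos 0.563 := le_cos_of_le_taylor (by norm_num) (by norm_num) (by norm_num)
  have hcost : cos 0.563 ≤ cos (0.82 - (θ₀ - sin θ₀) / 2) :=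
    cos_le_cos_of_nonneg_of_le_pi (by linarith) (by linarith) (by linarith)
  have hcosρ : cos 0.563 ≤ cos (ρ - (θ₀ - sin θ₀) / 2) :=
    cos_le_cos_of_nonneg_of_le_pi (by linarith) (by linarith) (by linarith)
  exact lt_diamS_of_forall_le_halfArc (t := 0.82) rfl hρ hθ₀ (by linarith) hD₂
    (by linarith) (by linarith) (by linarith) (by linarith) (by linarith) (by linarith)
    (fun s hs => (hshort s hs).le) (by rw [hS]; push_cast; linarith)

theorem lt_diamS_of_card_eq_four_of_exists_halfArc_le (hS : S.card = 4) (hD : D ≤ 2.7479)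
    (hshort : ∃ s ∈ S, halfArc s ≤ 0.75) : D < diamS S := by
  have hπ₁ := pi_gt_d6
  have hπ₂ := pi_lt_d6
  have ht : 0.68161 ≤ sin 0.75 := le_sin_of_le_taylor (by norm_num) (by norm_num) (by norm_num)
  have hT : 0.8752 ≤ sin 1.066 := le_sin_of_le_taylor (by norm_num) (by norm_num) (by norm_num)
  have hc : 0.8645 ≤ sin (2.09 / 2) :=
    le_sin_of_le_taylor (by norm_num) (by norm_num) (by norm_num)
  have hc' : 0.49898 ≤ sin (2.09 / 4) :=
    le_sin_of_le_taylor (by norm_num) (by norm_num) (by norm_num)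
  have hcost : 0.764 ≤ cos (0.75 - 0.1 / 2) :=
    le_cos_of_le_taylor (by norm_num) (by norm_num) (by norm_num)
  have hcosT : 0.526 ≤ cos (1.066 - 0.1 / 2) :=
    le_cos_of_le_taylor (by norm_num) (by norm_num) (by norm_num)
  exact lt_diamS_of_exists_halfArc_le (x := 0.1) (T := 1.066) (c := 2.09)
    ⟨by norm_num, by linarith⟩ (by norm_num) (by norm_num) (by norm_num) (by linarith)
    (by nlinarith) ⟨by norm_num, by linarith⟩ (by linarith) (by linarith) (by linarith)
    (by linarith) hshort (by rw [hS]; norm_num; linarith)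

theorem lt_diamS_of_card_eq_four (hS : S.card = 4) (hθ₀ : θ₀ ∈ Set.Icc 0 (π / 2))
    (hsum : θ₀ + sin θ₀ = π - π / 4)
    (hD : D ∈ Set.Ioo (π - (θ₀ - sin θ₀) - 1 / 1000) (π - (θ₀ - sin θ₀))) : D < diamS S := by
  obtain ⟨hD₁, hD₂⟩ := hD
  have hπ₁ := pi_gt_d6
  have hπ₂ := pi_lt_d6
  have hsinθ₁ : sin 1.375 ≤ 0.98094 := sin_le_of_taylor_le (by norm_num) (by norm_num) (by norm_num)
  have hθ₁ : 1.375 ≤ θ₀ := le_of_add_sin_le_add_sin hθ₀.1 (by linarith) (by linarith)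
  have hx := sub_sin_le_sub_sin hθ₀.2
  rw [sin_pi_div_two] at hx
  by_cases hshort : ∃ s ∈ S, halfArc s ≤ 0.75
  · exact lt_diamS_of_card_eq_four_of_exists_halfArc_le hS (by linarith) hshort
  push Not at hshort
  set ρ := D - 2 * sin θ₀ with hρ
  have ht : 0.68161 ≤ sin 0.75 := le_sin_of_le_taylor (by norm_num) (by norm_num) (by norm_num)
  have hsin : 0.706 ≤ sin 0.784 := le_sin_of_le_taylor (by norm_num) (by norm_num) (by norm_num)
  have hsinρ : sin 0.784 ≤ sin ρ :=
    sin_le_sin_of_le_of_le_pi_div_two (by linarith) (by linarith) (by linarith)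
  have hcos : 0.83 ≤ cos 0.589 := le_cos_of_le_taylor (by norm_num) (by norm_num) (by norm_num)
  have hcost : cos 0.589 ≤ cos (0.75 - (θ₀ - sin θ₀) / 2) :=
    cos_le_cos_of_nonneg_of_le_pi (by linarith) (by linarith) (by linarith)
  have hcosρ : cos 0.589 ≤ cos (ρ - (θ₀ - sin θ₀) / 2) :=
    cos_le_cos_of_nonneg_of_le_pi (by linarith) (by linarith) (by linarith)
  exact lt_diamS_of_forall_le_halfArc (t := 0.75) rfl hρ hθ₀ (by linarith) hD₂
    (by linarith) (by linarith) (by linarith) (by linarith) (by linarith) (by linarith)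
    (fun s hs => (hshort s hs).le) (by rw [hS]; push_cast; linarith)

theorem lt_diamS_of_card_filter_le_one (hD : D ≤ 2.891)
    (hS : (S.filter (0.695 < halfArc ·)).card ≤ 1) : D < diamS S := by
  have hπ₁ := pi_gt_d6
  have ht : 0.64038 ≤ sin 0.695 := le_sin_of_le_taylor (by norm_num) (by norm_num) (by norm_num)
  have hc : 0.999 ≤ sin (6.2 / 4) :=
    le_sin_of_le_taylor (by norm_num) (by norm_num) (by norm_num)
  refine lt_diamS_of_card_filter_mul_lt (x := 0) (t := 0.695) (c := 6.2) ⟨le_rfl, pi_pos.le⟩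
    ⟨by norm_num, by linarith⟩ (by nlinarith)
    (fun s l hs => volume_bridgedCenters_cons_le_add_of_le_halfArc le_rfl
      (by norm_num) hs ⟨by norm_num, by linarith⟩ (by linarith)) ?_
  have hcard : ((S.filter (0.695 < halfArc ·)).card : ℝ) ≤ 1 := by exact_mod_cast hS
  linarith

theorem lt_diamS_of_forall_mem_erase_le_halfArc {s₃ : ℝ × ℝ} (hS : S.card = 3) (hs₃ : s₃ ∈ S)
    (hshort : halfArc s₃ ≤ 0.63) (hlong : ∀ s ∈ S.erase s₃, 0.695 ≤ halfArc s)
    (hD : D ≤ 2.891) : D < diamS S := by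
  have hπ₁ := pi_gt_d6
  have hπ₂ := pi_lt_d6
  have ht : 0.64038 ≤ sin 0.695 := le_sin_of_le_taylor (by norm_num) (by norm_num) (by norm_num)
  have hT : 0.7392 ≤ sin 0.832 := le_sin_of_le_taylor (by norm_num) (by norm_num) (by norm_num)
  have hc : 0.999 ≤ sin (3.14 / 2) :=
    le_sin_of_le_taylor (by norm_num) (by norm_num) (by norm_num)
  have hc' : 0.7068 ≤ sin (3.14 / 4) :=
    le_sin_of_le_taylor (by norm_num) (by norm_num) (by norm_num)
  have hcost : 0.813 ≤ cos (0.695 - 0.15 / 2) :=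
    le_cos_of_le_taylor (by norm_num) (by norm_num) (by norm_num)
  have hcosT : 0.7268 ≤ cos (0.832 - 0.15 / 2) :=
    le_cos_of_le_taylor (by norm_num) (by norm_num) (by norm_num)
  have hx : (0.15 : ℝ) ∈ Set.Icc 0 π := ⟨by norm_num, by linarith⟩
  have hempty : bridgedCenters [s₃] 0.15 D = ∅ := by
    have hsin : 0.589 ≤ sin 0.63 :=
      le_sin_of_le_taylor (by norm_num) (by norm_num) (by norm_num)
    have hsub := sub_sin_le_sub_sin hshort
    have hs₃sin := sin_nonneg_of_nonneg_of_le_pi (halfArc_nonneg s₃) (by linarith)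
    refine Set.subset_eq_empty (bridgedCenters_cons_subset hx.1 ?_
      (TwoLegBound.of_lt_chordLen (List.forall_mem_nil _)) ?_) (bridgedCenters_nil hx (by linarith))
    all_goals linarith [halfArc_nonneg s₃, hs₃sin]
  have hvol := volume_bridgedCenters_append_le (l := (S.erase s₃).toList) (S := [s₃]) (x := 0.15)
    (D := D) (c := 3.14) fun s hs l _ =>
      volume_bridgedCenters_cons_le_add_of_euclidean (T := 0.832) hx.1 (by norm_num) (by norm_num)
        (by linarith) (hlong s (Finset.mem_toList.1 hs)) ⟨by norm_num, by linarith⟩ (by linarith)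
        (by linarith) (by linarith) (by linarith)
  rw [hempty, measureReal_empty, Finset.length_toList, Finset.card_erase_of_mem hs₃, hS] at hvol
  refine lt_diamS_of_volume_lt (fun s hs => ?_) (hvol.trans_lt (by norm_num; linarith))
  simp [hs, em']

theorem lt_diamS_of_card_eq_three_of_exists_halfArc_le (hS : S.card = 3) (hD : D ≤ 2.891)
    (hshort : ∃ s ∈ S, halfArc s ≤ 0.63) : D < diamS S := by
  obtain ⟨s₃, hs₃, hle⟩ := hshort
  by_cases hlong : ∀ s ∈ S.erase s₃, 0.695 ≤ halfArc s
  · exact lt_diamS_of_forall_mem_erase_le_halfArc hS hs₃ hle hlong hD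
  push Not at hlong
  obtain ⟨s₂, hs₂, hlt⟩ := hlong
  refine lt_diamS_of_card_filter_le_one hD ?_
  have hsub : S.filter (0.695 < halfArc ·) ⊆ (S.erase s₃).erase s₂ := fun s hs => by
    obtain ⟨hsS, hs⟩ := Finset.mem_filter.1 hs
    refine Finset.mem_erase.2 ⟨?_, Finset.mem_erase.2 ⟨?_, hsS⟩⟩ <;> rintro rfl <;> linarith
  refine (Finset.card_le_card hsub).trans_eq ?_
  rw [Finset.card_erase_of_mem hs₂, Finset.card_erase_of_mem hs₃, hS]

theorem lt_diamS_of_card_eq_three (hS : S.card = 3) (hθ₀ : θ₀ ∈ Set.Icc 0 (π / 2))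
    (hsum : θ₀ + sin θ₀ = π - π / 3)
    (hD : D ∈ Set.Ioo (π - (θ₀ - sin θ₀) - 1 / 1000) (π - (θ₀ - sin θ₀))) : D < diamS S := by
  obtain ⟨hD₁, hD₂⟩ := hD
  have hπ₁ := pi_gt_d6
  have hπ₂ := pi_lt_d6
  have hsinθ₁ : sin 1.1725 ≤ 0.92175 :=
    sin_le_of_taylor_le (by norm_num) (by norm_num) (by norm_num)
  have hθ₁ : 1.1725 ≤ θ₀ := le_of_add_sin_le_add_sin hθ₀.1 (by linarith) (by linarith)
  have hx := sub_sin_le_sub_sin hθ₀.2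
  rw [sin_pi_div_two] at hx
  by_cases hshort : ∃ s ∈ S, halfArc s ≤ 0.63
  · exact lt_diamS_of_card_eq_three_of_exists_halfArc_le hS (by linarith) hshort
  push Not at hshort
  set ρ := D - 2 * sin θ₀ with hρ
  have ht : 0.5891 ≤ sin 0.63 := le_sin_of_le_taylor (by norm_num) (by norm_num) (by norm_num)
  have hsin : 0.865 ≤ sin 1.046 := le_sin_of_le_taylor (by norm_num) (by norm_num) (by norm_num)
  have hsinρ : sin 1.046 ≤ sin ρ :=
    sin_le_sin_of_le_of_le_pi_div_two (by linarith) (by linarith) (by linarith)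
  have hcos : 0.875 ≤ cos 0.505 := le_cos_of_le_taylor (by norm_num) (by norm_num) (by norm_num)
  have hcost : cos 0.505 ≤ cos (0.63 - (θ₀ - sin θ₀) / 2) :=
    cos_le_cos_of_nonneg_of_le_pi (by linarith) (by linarith) (by linarith)
  have hcos' : 0.603 ≤ cos 0.9225 := le_cos_of_le_taylor (by norm_num) (by norm_num) (by norm_num)
  have hcosρ : cos 0.9225 ≤ cos (ρ - (θ₀ - sin θ₀) / 2) :=
    cos_le_cos_of_nonneg_of_le_pi (by linarith) (by linarith) (by linarith)
  exact lt_diamS_of_forall_le_halfArc (t := 0.63) rfl hρ hθ₀ (by linarith) hD₂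
    (by linarith) (by linarith) (by linarith) (by linarith) (by linarith) (by linarith)
    (fun s hs => (hshort s hs).le) (by rw [hS]; push_cast; linarith)

end ThreeToFive

/-! ### Lower bound for two shortcuts -/

theorem arcDist_add_pi (p q : ℝ) : arcDist p (q + π) = π - arcDist p q := by
  refine le_antisymm ?_ ?_
  · obtain ⟨n, hn⟩ := exists_arcDist_eq_abs p q
    have hπ := arcDist_le_pi p q
    rw [hn] at hπ ⊢
    rcases abs_cases (p - q + 2 * π * n) with ⟨h, _⟩ | ⟨h, _⟩ <;> rw [h] at hπ ⊢
    · refine (arcDist_le_abs_add _ _ n).trans (abs_le.2 ⟨?_, ?_⟩) <;> linarith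
    · refine (arcDist_le_abs_add _ _ (n + 1)).trans (abs_le.2 ⟨?_, ?_⟩) <;> push_cast <;> linarith
  · have hπ : |q - (q + π)| = π := by rw [sub_add_cancel_left, abs_neg, abs_of_pos pi_pos]
    have := arcDist_triangle q p (q + π)
    rw [arcDist_of_abs_le hπ.le, hπ, arcDist_comm q] at this
    linarith

theorem exists_arcDist_eq_half (p q : ℝ) :
    ∃ m, arcDist m p = arcDist p q / 2 ∧ arcDist m q = arcDist p q / 2 := by
  obtain ⟨n, hn⟩ := exists_arcDist_eq_abs p q
  set d := p - q + 2 * π * n with hd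
  have hp : arcDist (p - d / 2) p ≤ arcDist p q / 2 := by
    refine (arcDist_le_abs _ _).trans_eq ?_
    rw [sub_sub_cancel_left, abs_neg, abs_div, abs_two, hn]
  have hq : arcDist (p - d / 2) q ≤ arcDist p q / 2 := by
    refine (arcDist_le_abs_add _ _ n).trans_eq ?_
    rw [show p - d / 2 - q + 2 * π * n = d / 2 by rw [hd]; ring, abs_div, abs_two, hn]
  have htri := arcDist_triangle p (p - d / 2) q
  rw [arcDist_comm p (p - d / 2)] at htri
  exact ⟨p - d / 2, by linarith, by linarith⟩

theorem exists_arcDist_le_pi_div_four (m₁ m₂ : ℝ) :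
    ∃ p, arcDist p m₁ ≤ π / 4 ∧ (arcDist p m₂ ≤ π / 4 ∨ arcDist p (m₂ + π) ≤ π / 4) := by
  rcases le_total (arcDist m₁ m₂) (π / 2) with h | h
  · obtain ⟨p, h₁, h₂⟩ := exists_arcDist_eq_half m₁ m₂
    exact ⟨p, by linarith, Or.inl (by linarith)⟩
  · obtain ⟨p, h₁, h₂⟩ := exists_arcDist_eq_half m₁ (m₂ + π)
    rw [arcDist_add_pi m₁] at h₁ h₂
    exact ⟨p, by linarith, Or.inr (by linarith)⟩

-- The potential is the distance from `p`, flattened over a length `δ` around `π / 2`.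
theorem pi_sub_le_netDist_add_pi {S : List (ℝ × ℝ)} {p δ : ℝ} (hδ : 0 ≤ δ)
    (hS : ∀ s ∈ S, π / 2 - δ ≤ chordLen s.1 s.2 ∧ ∃ c ∈ Set.Icc (δ / 2) (π / 2 - δ / 2),
      arcDist p s.1 ∈ Set.Icc c (c + π / 2) ∧ arcDist p s.2 ∈ Set.Icc c (c + π / 2)) :
    π - δ ≤ netDist S p (p + π) := by
  set g : ℝ → ℝ := fun r => min r (max (π / 2 - δ / 2) (r - δ)) with hg
  have hlip {a b d : ℝ} (hd : 0 ≤ d) (h : b ≤ a + d) : g b ≤ g a + d := by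
    rw [hg, ← min_add_add_right, ← max_add_add_right]
    exact min_le_min h (max_le_max (by linarith) (by linarith))
  have hrange {c r : ℝ} (hc : c ∈ Set.Icc (δ / 2) (π / 2 - δ / 2))
      (hr : r ∈ Set.Icc c (c + π / 2)) : g r ∈ Set.Icc c (c + π / 2 - δ) :=
    ⟨le_min hr.1 (le_max_of_le_left hc.2),
      min_le_of_right_le (max_le (by linarith [hc.1]) (by linarith [hr.2]))⟩
  have h0 : g (arcDist p p) ≤ 0 := (min_le_left _ _).trans_eq (arcDist_self p)
  have hπ : π - δ ≤ g (arcDist p (p + π)) := by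
    rw [arcDist_add_pi, arcDist_self, sub_zero]
    exact le_min (by linarith) (le_max_right _ _)
  have := sub_le_netDist (S := S) (f := fun a => g (arcDist p a))
    (fun a b => sub_le_iff_le_add'.2 (hlip (arcDist_nonneg a b) (arcDist_triangle p a b)))
    (fun s hs => by
      obtain ⟨hle, c, hc, h₁, h₂⟩ := hS s hs
      obtain ⟨l₁, u₁⟩ := hrange hc h₁
      obtain ⟨l₂, u₂⟩ := hrange hc h₂
      exact abs_le.2 ⟨by linarith, by linarith⟩) p (p + π)
  linarith

theorem exists_arcDist_mem_Icc {p m : ℝ} {s : ℝ × ℝ} {δ : ℝ} (hδ : δ ≤ π / 2)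
    (hs : π / 4 + δ / 2 ≤ halfArc s) (hm₁ : arcDist m s.1 = halfArc s)
    (hm₂ : arcDist m s.2 = halfArc s) (hp : arcDist p m ≤ π / 4 ∨ arcDist p (m + π) ≤ π / 4) :
    ∃ c ∈ Set.Icc (δ / 2) (π / 2 - δ / 2),
      arcDist p s.1 ∈ Set.Icc c (c + π / 2) ∧ arcDist p s.2 ∈ Set.Icc c (c + π / 2) := by
  have hsπ := halfArc_le s
  rcases hp with hp | hp
  · have hmem (e : ℝ) (he : arcDist m e = halfArc s) :
        arcDist p e ∈ Set.Icc (halfArc s - π / 4) (halfArc s - π / 4 + π / 2) := by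
      have htri := arcDist_triangle m p e
      rw [arcDist_comm m p] at htri
      exact ⟨by linarith, by linarith [arcDist_triangle p m e]⟩
    exact ⟨halfArc s - π / 4, ⟨by linarith, by linarith⟩, hmem _ hm₁, hmem _ hm₂⟩
  · have hmem (e : ℝ) (he : arcDist m e = halfArc s) :
        arcDist p e ∈ Set.Icc (3 * π / 4 - halfArc s) (3 * π / 4 - halfArc s + π / 2) := by
      have hlower := arcDist_triangle p e m
      have hupper := arcDist_triangle p (m + π) e
      rw [arcDist_comm e, he] at hlower
      rw [arcDist_comm (m + π), arcDist_add_pi, arcDist_add_pi, arcDist_comm e, he] at hupper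
      rw [arcDist_add_pi] at hp
      exact ⟨by linarith, by linarith⟩
    exact ⟨3 * π / 4 - halfArc s, ⟨by linarith, by linarith⟩, hmem _ hm₁, hmem _ hm₂⟩

theorem exists_pi_sub_le_netDist_pair {s t : ℝ × ℝ} {θ₀ : ℝ} (hθ₀ : θ₀ ∈ Set.Icc 0 (π / 2))
    (hsum : θ₀ + sin θ₀ = π / 2) (hs : θ₀ ≤ halfArc s) (ht : θ₀ ≤ halfArc t) :
    ∃ p q, π - (θ₀ - sin θ₀) ≤ netDist [s, t] p q := by
  obtain ⟨m₁, h₁, h₁'⟩ := exists_arcDist_eq_half s.1 s.2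
  obtain ⟨m₂, h₂, h₂'⟩ := exists_arcDist_eq_half t.1 t.2
  obtain ⟨p, hp₁, hp₂⟩ := exists_arcDist_le_pi_div_four m₁ m₂
  have hδ : 0 ≤ θ₀ - sin θ₀ := sub_nonneg.2 (sin_le hθ₀.1)
  have hsin0 : 0 ≤ sin θ₀ := sin_nonneg_of_nonneg_of_le_pi hθ₀.1 (by linarith [hθ₀.2, pi_pos])
  have hchord (r : ℝ × ℝ) (hr : θ₀ ≤ halfArc r) : π / 2 - (θ₀ - sin θ₀) ≤ chordLen r.1 r.2 := by
    rw [chordLen_eq_two_mul_sin_halfArc]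
    linarith [sin_le_sin_of_le_of_le_pi_div_two (by linarith [hθ₀.1, pi_pos]) (halfArc_le r) hr]
  have hmem {r : ℝ × ℝ} {m : ℝ} (hr : θ₀ ≤ halfArc r) :=
    exists_arcDist_mem_Icc (p := p) (m := m) (s := r) (δ := θ₀ - sin θ₀) (by linarith)
      (by linarith)
  refine ⟨p, p + π, pi_sub_le_netDist_add_pi hδ fun r hr => ?_⟩
  obtain rfl | rfl : r = s ∨ r = t := by simpa using hr
  · exact ⟨hchord r hs, hmem hs h₁ h₁' (Or.inl hp₁)⟩
  · exact ⟨hchord r ht, hmem ht h₂ h₂' hp₂⟩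

theorem volume_bridgedCenters_pair_lt_of_le {s t : ℝ × ℝ} {θ₀ D : ℝ} (hθ₀ : θ₀ ≤ 0.832)
    (hsum : θ₀ + sin θ₀ = π / 2) (hD : D ∈ Set.Ioo 2 (π - (θ₀ - sin θ₀)))
    (ht : halfArc t ∈ Set.Icc 0.65 θ₀) (hts : halfArc t ≤ halfArc s) :
    volume.real (bridgedCenters [s, t] (θ₀ - sin θ₀) D) < 2 * π := by
  obtain ⟨ht₁, ht₂⟩ := ht
  obtain ⟨hD₁, hD₂⟩ := hD
  have hπ₁ := pi_gt_d6
  have hπ₂ := pi_lt_d6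
  have hx : θ₀ - sin θ₀ ∈ Set.Icc 0 π := ⟨by linarith [sin_le (by linarith : 0 ≤ θ₀)], by linarith⟩
  have hsin : 0.6051 ≤ sin 0.65 :=
    le_sin_of_le_taylor (by norm_num) (by norm_num) (by norm_num)
  have hsint : sin 0.65 ≤ sin (halfArc t) :=
    sin_le_sin_of_le_of_le_pi_div_two (by linarith) (halfArc_le t) ht₁
  have hsins : sin (halfArc t) ≤ sin (halfArc s) :=
    sin_le_sin_of_le_of_le_pi_div_two (by linarith) (halfArc_le s) hts
  have hsub := sub_sin_le_sub_sin ht₂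
  have hsub₀ := sin_le (halfArc_nonneg t)
  have hvolt := volume_bridgedCenters_cons_le_add (s := t) (S := []) (D := D)
    (ρ := D - 2 * sin (halfArc t)) (c := D - 2 * sin (halfArc t)) hx.1 (by linarith)
    (TwoLegBound.of_lt_chordLen (List.forall_mem_nil _)) (by linarith) le_rfl
    (by linarith [sin_le_one (halfArc t)])
  rw [bridgedCenters_nil hx hD₂, measureReal_empty] at hvolt
  have hvols := volume_bridgedCenters_cons_le_add_two_mul (s := s) (S := [t]) hx.1
    (by linarith) (TwoLegBound.singleton t (D - 2 * sin (halfArc s))) le_rfl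
    (by linarith [sin_le_one (halfArc s)])
  linarith

theorem volume_bridgedCenters_pair_lt_of_halfArc_le {s t : ℝ × ℝ} {D : ℝ}
    (hD : D ∈ Set.Ioo 2 3.0515) (ht : halfArc t ≤ 0.65) (hts : halfArc t ≤ halfArc s) :
    volume.real (bridgedCenters [s, t] 0 D) < 2 * π := by
  obtain ⟨hD₁, hD₂⟩ := hD
  have hπ₁ := pi_gt_d6
  have hx : (0 : ℝ) ∈ Set.Icc 0 π := ⟨le_rfl, pi_pos.le⟩
  have ht0 := halfArc_nonneg t
  have hsin : 0.6051 ≤ sin 0.65 :=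
    le_sin_of_le_taylor (by norm_num) (by norm_num) (by norm_num)
  have hmul := mul_sin_le_mul_sin ht0 ht (by norm_num) (by linarith)
  have hsint : 4 * halfArc t ≤ 6 * sin (halfArc t) := by nlinarith
  have hsins : sin (halfArc t) ≤ sin (halfArc s) :=
    sin_le_sin_of_le_of_le_pi_div_two (by linarith) (halfArc_le s) hts
  have hsub := sub_sin_le_sub_sin ht
  have hsub₀ := sin_le ht0
  have hempty : bridgedCenters [t] 0 D = ∅ :=
    Set.subset_eq_empty (bridgedCenters_cons_subset hx.1 (by linarith)
      (TwoLegBound.of_lt_chordLen (List.forall_mem_nil _)) (by linarith))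
      (bridgedCenters_nil hx (by linarith))
  have hvol := volume_bridgedCenters_cons_le_add_two_mul (s := s) (S := [t]) hx.1
    (by linarith [halfArc_nonneg s]) (TwoLegBound.singleton t (D - 2 * sin (halfArc s))) le_rfl
    (by linarith [sin_le_one (halfArc s)])
  rw [hempty, measureReal_empty] at hvol
  linarith

theorem lt_diamS_of_card_eq_two {S : Finset (ℝ × ℝ)} {θ₀ D : ℝ} (hS : S.card = 2)
    (hθ₀ : θ₀ ∈ Set.Icc 0 (π / 2)) (hsum : θ₀ + sin θ₀ = π - π / 2)
    (hD : D ∈ Set.Ioo (π - (θ₀ - sin θ₀) - 1 / 1000) (π - (θ₀ - sin θ₀))) : D < diamS S := by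
  have hπ₁ := pi_gt_d6
  have hπ₂ := pi_lt_d6
  have hsin₁ : sin 0.8305 ≤ 0.7384 := sin_le_of_taylor_le (by norm_num) (by norm_num) (by norm_num)
  have hsin₂ : 0.7391 ≤ sin 0.832 := le_sin_of_le_taylor (by norm_num) (by norm_num) (by norm_num)
  have hθ₁ : 0.8305 ≤ θ₀ := le_of_add_sin_le_add_sin hθ₀.1 (by linarith) (by linarith)
  have hθ₂ : θ₀ ≤ 0.832 := le_of_add_sin_le_add_sin (by norm_num) hθ₀.2 (by linarith)
  have hD2 : 2 < D := by linarith [hD.1]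
  obtain ⟨s, t, hle, hmem⟩ : ∃ s t, halfArc t ≤ halfArc s ∧ ∀ r ∈ S, r ∈ [s, t] := by
    obtain ⟨s, t, -, rfl⟩ := Finset.card_eq_two.1 hS
    rcases le_total (halfArc t) (halfArc s) with h | h
    · exact ⟨s, t, h, by simp⟩
    · exact ⟨t, s, h, by simp⟩
  rcases le_total θ₀ (halfArc t) with ht | ht
  · obtain ⟨p, q, hpq⟩ := exists_pi_sub_le_netDist_pair hθ₀ (by linarith) (ht.trans hle) ht
    exact hD.2.trans_le (hpq.trans (netDist_le_diamS hmem p q))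
  rcases le_total 0.65 (halfArc t) with ht' | ht'
  · exact lt_diamS_of_volume_lt hmem
      (volume_bridgedCenters_pair_lt_of_le hθ₂ (by linarith) ⟨hD2, hD.2⟩ ⟨ht', ht⟩ hle)
  · exact lt_diamS_of_volume_lt hmem
      (volume_bridgedCenters_pair_lt_of_halfArc_le ⟨hD2, by linarith [hD.2]⟩ ht' hle)

/-! ### Rotated chords -/

/-- The `k` chords of half-arc `θ` centred at the angles `j * π / k` for `j < k`, that is, the
rotations of one of them through these angles. -/
noncomputable def rotatedChords (k : ℕ) (θ : ℝ) : Finset (ℝ × ℝ) :=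
  (Finset.range k).image fun j : ℕ => ((j : ℝ) * π / k - θ, (j : ℝ) * π / k + θ)

theorem card_rotatedChords {k : ℕ} (hk : 0 < k) (θ : ℝ) : (rotatedChords k θ).card = k := by
  have hk' : (k : ℝ) ≠ 0 := by exact_mod_cast hk.ne'
  rw [rotatedChords, Finset.card_image_of_injective, Finset.card_range]
  intro i j hij
  have hfst : (i : ℝ) * π / k = j * π / k := sub_left_injective (congrArg Prod.fst hij)
  exact_mod_cast mul_right_cancel₀ pi_ne_zero ((div_left_inj' hk').1 hfst)

theorem arcDist_of_mem_rotatedChords {k : ℕ} {θ : ℝ} (hθ : θ ∈ Set.Icc 0 (π / 2)) {s : ℝ × ℝ}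
    (hs : s ∈ rotatedChords k θ) : arcDist s.1 s.2 = 2 * θ := by
  obtain ⟨j, -, rfl⟩ := Finset.mem_image.1 hs
  exact arcDist_sub_add_self hθ.1 hθ.2

theorem chordLen_of_mem_rotatedChords {k : ℕ} {θ : ℝ} (hθ : θ ∈ Set.Icc 0 (π / 2)) {s : ℝ × ℝ}
    (hs : s ∈ rotatedChords k θ) : chordLen s.1 s.2 = 2 * sin θ := by
  rw [chordLen_eq_two_mul_sin_halfArc, halfArc, arcDist_of_mem_rotatedChords hθ hs,
    mul_div_cancel_left₀ _ two_ne_zero]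

theorem isShortcut_of_mem_rotatedChords {k : ℕ} {θ : ℝ} (hθ : θ ∈ Set.Ioc 0 (π / 2))
    {s : ℝ × ℝ} (hs : s ∈ rotatedChords k θ) : IsShortcut s := by
  rw [IsShortcut, arcDist_of_mem_rotatedChords ⟨hθ.1.le, hθ.2⟩ hs]
  exact mul_ne_zero two_ne_zero hθ.1.ne'

theorem Spans.add_two_pi_mul_int {u v m φ : ℝ} (h : Spans u v m φ) (n : ℤ) :
    Spans u v (m + 2 * π * n) φ := by
  refine ⟨h.1.trans ?_, h.2.trans ?_⟩
  · rw [add_sub_right_comm, coe_add_two_pi_mul_int]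
  · rw [add_right_comm, coe_add_two_pi_mul_int]

theorem Spans.add_int_mul_pi {u v m φ : ℝ} (h : Spans u v m φ) (n : ℤ) :
    Spans u v (m + n * π) φ ∨ Spans v u (m + n * π) (π - φ) := by
  obtain ⟨r, rfl | rfl⟩ := n.even_or_odd'
  · left
    convert h.add_two_pi_mul_int r using 1
    push_cast; ring
  · right
    convert h.reverse.add_two_pi_mul_int r using 1
    push_cast; ring

theorem exists_mem_rotatedChords_spans {k : ℕ} (hk : 0 < k) (θ : ℝ) (M : ℤ) :
    ∃ s ∈ rotatedChords k θ, Spans s.1 s.2 (M * (π / k)) θ ∨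
      Spans s.2 s.1 (M * (π / k)) (π - θ) := by
  have hk' : (k : ℤ) ≠ 0 := by exact_mod_cast hk.ne'
  have hkr : (k : ℝ) ≠ 0 := by exact_mod_cast hk.ne'
  obtain ⟨j, hj⟩ := Int.eq_ofNat_of_zero_le (M.emod_nonneg hk')
  have hjk : j < k := by
    have := M.emod_lt_of_pos (by exact_mod_cast hk : (0 : ℤ) < k)
    omega
  have hM : (M : ℝ) * (π / k) = j * π / k + ((M / k : ℤ) : ℝ) * π := by
    have hdiv : (M : ℝ) = j + k * ((M / k : ℤ) : ℝ) := by
      have := M.emod_add_mul_ediv k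
      rw [hj] at this
      exact_mod_cast this.symm
    rw [hdiv]
    field_simp
  rw [hM]
  exact ⟨_, Finset.mem_image.2 ⟨j, Finset.mem_range.2 hjk, rfl⟩,
    Spans.add_int_mul_pi ⟨rfl, rfl⟩ (M / k)⟩

theorem exists_int_arcDist_le {P : ℝ} (hP : 0 < P) (z : ℝ) :
    ∃ M : ℤ, arcDist z (M * P) ≤ P / 2 := by
  refine ⟨round (z / P), (arcDist_le_abs _ _).trans ?_⟩
  have hround := mul_le_mul_of_nonneg_right (abs_sub_round (z / P)) hP.le
  rw [← abs_of_pos hP, ← abs_mul, abs_of_pos hP, sub_mul, div_mul_cancel₀ _ hP.ne'] at hround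
  linarith

theorem Spans.arcDist_add_chordLen_add_arcDist_le {u v m φ p q z γ r : ℝ} (h : Spans u v m φ)
    (hpq : Spans p q z γ) (hz : arcDist z m ≤ r) (hφ : |φ - γ| ≤ r) :
    arcDist p u + chordLen u v + arcDist v q ≤ 2 * r + chordLen u v := by
  rw [arcDist_congr hpq.1 rfl, arcDist_congr rfl hpq.2]
  linarith [h.arcDist_add_arcDist_le hz hφ]

theorem dS_le_of_mem {S : Finset (ℝ × ℝ)} {u v : ℝ} (h : (u, v) ∈ S ∨ (v, u) ∈ S) (p q : ℝ) :
    dS S p q ≤ arcDist p u + chordLen u v + arcDist v q :=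
  dS_le_walkCost (L := [(u, v)]) (by simpa using h) p q

theorem exists_detour_rotatedChords_le {k : ℕ} {θ p q z γ : ℝ} (hk : 0 < k)
    (hθ : θ ∈ Set.Icc 0 (π / 2)) (hpq : Spans p q z γ) (hγ : |θ - γ| ≤ π / k / 2)
    (hγ' : |π - θ - γ| ≤ π / k / 2) :
    ∃ u v, ((u, v) ∈ rotatedChords k θ ∨ (v, u) ∈ rotatedChords k θ) ∧
      arcDist p u + chordLen u v + arcDist v q ≤ π / k + 2 * sin θ := by
  obtain ⟨M, hM⟩ := exists_int_arcDist_le (div_pos pi_pos (Nat.cast_pos.2 hk)) z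
  obtain ⟨s, hs, hspan | hspan⟩ := exists_mem_rotatedChords_spans hk θ M
  · refine ⟨s.1, s.2, Or.inl hs, ?_⟩
    have := hspan.arcDist_add_chordLen_add_arcDist_le hpq hM hγ
    linarith [chordLen_of_mem_rotatedChords hθ hs]
  · refine ⟨s.2, s.1, Or.inr hs, ?_⟩
    have := hspan.arcDist_add_chordLen_add_arcDist_le hpq hM hγ'
    linarith [chordLen_of_mem_rotatedChords hθ hs, chordLen_comm s.2 s.1]

theorem diamS_rotatedChords_le {k : ℕ} {θ : ℝ} (hk : 0 < k) (hθ : θ ∈ Set.Icc 0 (π / 2))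
    (hsum : θ + sin θ = π - π / k) (hδ : θ - sin θ ≤ π / k) :
    diamS (rotatedChords k θ) ≤ π - (θ - sin θ) := by
  refine diamS_le fun p q => ?_
  rcases le_total (arcDist p q) (π - (θ - sin θ)) with hpq | hpq
  · exact (dS_le_arcDist _ p q).trans hpq
  have hγ_le := halfArc_le (p, q)
  have hle_γ : π - (θ - sin θ) ≤ 2 * halfArc (p, q) := by rwa [← arcDist_eq_two_mul_halfArc]
  have hγ : |θ - halfArc (p, q)| ≤ π / k / 2 := abs_le.2 ⟨by linarith, by linarith [hθ.2]⟩
  have hγ' : |π - θ - halfArc (p, q)| ≤ π / k / 2 := abs_le.2 ⟨by linarith [hθ.2], by linarith⟩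
  obtain ⟨z, hspan | hspan⟩ := exists_spans_halfArc (p, q)
  · obtain ⟨u, v, huv, hle⟩ := exists_detour_rotatedChords_le hk hθ hspan hγ hγ'
    linarith [dS_le_of_mem huv p q]
  · obtain ⟨u, v, huv, hle⟩ := exists_detour_rotatedChords_le hk hθ hspan hγ hγ'
    linarith [dS_le_of_mem huv.symm p q, arcDist_comm p v, chordLen_comm v u, arcDist_comm u q]

/-! ### The optimal diameter -/

theorem pi_sub_le_diamS {k : ℕ} {θ₀ : ℝ} {S : Finset (ℝ × ℝ)} (hk : k ∈ ({2, 3, 4, 5} : Set ℕ))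
    (hθ₀ : θ₀ ∈ Set.Icc 0 (π / 2)) (hsum : θ₀ + sin θ₀ = π - π / k) (hS : S.card = k) :
    π - (θ₀ - sin θ₀) ≤ diamS S := by
  refine le_of_forall_lt_imp_le_of_dense fun c hc => ?_
  have hD {D : ℝ} (hD : D ∈ Set.Ioo (π - (θ₀ - sin θ₀) - 1 / 1000) (π - (θ₀ - sin θ₀))) :
      D < diamS S := by
    rcases hk with rfl | rfl | rfl | rfl
    · exact lt_diamS_of_card_eq_two hS hθ₀ (mod_cast hsum) hD
    · exact lt_diamS_of_card_eq_three hS hθ₀ (mod_cast hsum) hD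
    · exact lt_diamS_of_card_eq_four hS hθ₀ (mod_cast hsum) hD
    · exact lt_diamS_of_card_eq_five hS hθ₀ (mod_cast hsum) hD
  obtain ⟨D, hcD, hDlt⟩ := exists_between
    (max_lt hc (by norm_num : π - (θ₀ - sin θ₀) - 1 / 1000 < π - (θ₀ - sin θ₀)))
  rw [max_lt_iff] at hcD
  exact hcD.1.le.trans (hD ⟨hcD.2, hDlt⟩).le

theorem sdelta_eq {a : ℝ} (ha : a ∈ Set.Icc 0 2) :
    sdelta a = arcsin (a / 2) - sin (arcsin (a / 2)) := by
  rw [sdelta, sin_arcsin (by linarith [ha.1]) (by linarith [ha.2])]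

theorem arcsin_add_sin_arcsin {k : ℕ} {a : ℝ} (hk : 0 < k) (ha : a ∈ Set.Icc (0 : ℝ) 2)
    (hastar : a + sdelta a = ((k : ℝ) - 1) * π / k) :
    arcsin (a / 2) + sin (arcsin (a / 2)) = π - π / k := by
  have hk' : (k : ℝ) ≠ 0 := by exact_mod_cast hk.ne'
  rw [sub_one_mul, sub_div, mul_div_cancel_left₀ _ hk', sdelta] at hastar
  rw [sin_arcsin (by linarith [ha.1]) (by linarith [ha.2])]
  linarith

theorem pos_of_add_sin_eq {k : ℕ} {θ : ℝ} (hk : 2 ≤ k) (hθ : 0 ≤ θ)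
    (hsum : θ + sin θ = π - π / k) : 0 < θ := by
  have : π / k < π := div_lt_self pi_pos (by exact_mod_cast hk)
  refine hθ.lt_of_ne fun h => ?_
  rw [← h, sin_zero] at hsum
  linarith

theorem sub_sin_le_pi_div {k : ℕ} {θ : ℝ} (hk : 0 < k) (hk5 : k ≤ 5) (hθ : θ ≤ π / 2) :
    θ - sin θ ≤ π / k :=
  calc θ - sin θ ≤ π / 2 - sin (π / 2) := sub_sin_le_sub_sin hθ
    _ ≤ π / 5 := by rw [sin_pi_div_two]; linarith [pi_lt_d2]
    _ ≤ π / k := by gcongr; exact_mod_cast hk5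

/-- for `k ∈ {2,3,4,5}`, `diam(k) = π - δ*_k`, attained by the `k` chords of
length `a*_k` obtained from one fixed chord by rotations through `jπ/k`, `j = 0,…,k-1`. -/
theorem stmt1 (k : ℕ) (hk : k ∈ ({2, 3, 4, 5} : Set ℕ)) (a : ℝ)
    (ha : a ∈ Set.Icc (0 : ℝ) 2) (hastar : a + sdelta a = ((k : ℝ) - 1) * π / k) :
    diamK k = π - sdelta a ∧
    diamS ((Finset.range k).image fun j : ℕ =>
        ((j : ℝ) * π / k - Real.arcsin (a / 2), (j : ℝ) * π / k + Real.arcsin (a / 2)))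
      = π - sdelta a := by
  obtain ⟨hk2, hk5⟩ : 2 ≤ k ∧ k ≤ 5 := by rcases hk with rfl | rfl | rfl | rfl <;> norm_num
  have hk0 : 0 < k := two_pos.trans_le hk2
  have hsum := arcsin_add_sin_arcsin hk0 ha hastar
  rw [sdelta_eq ha]
  have hθ : arcsin (a / 2) ∈ Set.Icc 0 (π / 2) :=
    ⟨arcsin_nonneg.2 (by linarith [ha.1]), arcsin_le_pi_div_two _⟩
  have hpos := pos_of_add_sin_eq hk2 hθ.1 hsum
  have hopt : diamS (rotatedChords k (arcsin (a / 2))) =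
      π - (arcsin (a / 2) - sin (arcsin (a / 2))) :=
    le_antisymm (diamS_rotatedChords_le hk0 hθ hsum (sub_sin_le_pi_div hk0 hk5 hθ.2))
      (pi_sub_le_diamS hk hθ hsum (card_rotatedChords hk0 _))
  refine ⟨IsLeast.csInf_eq ⟨⟨rotatedChords k (arcsin (a / 2)), card_rotatedChords hk0 _,
    fun _ => isShortcut_of_mem_rotatedChords ⟨hpos, hθ.2⟩, hopt.symm⟩, ?_⟩, hopt⟩
  rintro _ ⟨S, hS, -, rfl⟩
  exact pi_sub_le_diamS hk hθ hsum hS
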